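/- Let n ≥ 2, let D ⊆ ℂⁿ be an open convex set, and let F : D → ℂⁿ be an injective holomorphic map whose image F(D) is Runge in ℂⁿ. Then for every compact set L ⊂ D and every ε > 0 there exists a holomorphic automorphism α of ℂⁿ such that sup_{z∈L} ‖F(z) − α(z)‖ < ε. -/

import Mathlib

/-!
After a translation the convex domain `D` contains the origin. Then `F (e^{-t} x)`, `t ≥ 0`, is an
isotopy of injective maps `D → F(D)`, which for large `t` is close to the affine automorphism
`x ↦ F 0 + e^{-t} F'(0) x` of `ℂⁿ`. By Osgood's theorem (`fderiv_injective_of_injOn`) an injective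
holomorphic map has a holomorphic inverse (`holomorphic_inverse`), so that the field on `F(D)` given
by `W (F x) = F'(x) x` is holomorphic. The flow of this single autonomous field transports
`F (e^{-t} x)` back to `F x`; hence `F` is, on compact sets, approximately the flow of `W` for a
time `T`, applied to an affine automorphism.

It remains to approximate the flow of `W` by automorphisms. As `F(D)` is Runge, `W` is approximated
on compact sets by a polynomial field. Every polynomial field is a finite sum of shear fields
`g • v` and overshear fields `(g μ) • v` with `g` invariant in the direction `v`
(`polynomialField_mem`); this is the point where `n ≥ 2` enters. The flows of shears and overshears
are explicit automorphisms, and by Lie's product formula their compositions form a one-step scheme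
`S h`, made of automorphisms, which is consistent with the sum of the fields
(`hasAutScheme_of_mem_span`). Iterating `S (T / N)` a large number `N` of times approximates the
flow; the error is controlled by a discrete Gronwall inequality (`scheme_error`), which uses that
the exact curve stays in a compact part of `F(D)`. No existence theory for differential equations
is needed, because the exact solution `F (e^t x)` is explicit.

Osgood's theorem is proved by induction on the dimension. At a point with `f' ≠ 0` one restricts `f`
to a hypersurface. If `f'` vanished at some point, then the zero set of `det f'`, on which `f' = 0`
by the first case, would contain a holomorphic curve, and `f` would be constant along it.
-/

open Set

noncomputable section

/-- An open set `Ω ⊆ ℂⁿ` is Runge in ℂⁿ: every holomorphic function on `Ω` can be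
approximated uniformly on compact subsets of `Ω` by polynomials. -/
def IsRunge (n : ℕ) (Ω : Set (EuclideanSpace ℂ (Fin n))) : Prop :=
  IsOpen Ω ∧
  ∀ f : EuclideanSpace ℂ (Fin n) → ℂ, DifferentiableOn ℂ f Ω →
    ∀ K : Set (EuclideanSpace ℂ (Fin n)), IsCompact K → K ⊆ Ω →
      ∀ ε : ℝ, 0 < ε → ∃ p : MvPolynomial (Fin n) ℂ,
        ∀ z ∈ K, ‖f z - MvPolynomial.eval (fun i => z i) p‖ < ε

/-- `f` is a holomorphic automorphism of ℂⁿ: bijective, holomorphic, with holomorphic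
inverse. -/
def IsAutCn (n : ℕ) (f : EuclideanSpace ℂ (Fin n) → EuclideanSpace ℂ (Fin n)) : Prop :=
  Differentiable ℂ f ∧
  ∃ g : EuclideanSpace ℂ (Fin n) → EuclideanSpace ℂ (Fin n),
    Differentiable ℂ g ∧ Function.LeftInverse g f ∧ Function.RightInverse g f

section AndersenLempert
open Metric Filter Topology

/-! ### Cauchy estimates and derivatives of holomorphic maps -/

section Holomorphic
variable {E G : Type*} [NormedAddCommGroup E] [NormedSpace ℂ E]
  [NormedAddCommGroup G] [NormedSpace ℂ G]

theorem norm_fderiv_le_of_ball {f : E → G} {z : E} {r M : ℝ} (hr : 0 < r)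
    (hf : DifferentiableOn ℂ f (ball z r)) (hM : ∀ w ∈ ball z r, ‖f w‖ ≤ M) :
    ‖fderiv ℂ f z‖ ≤ 2 * M / r := by
  refine Complex.norm_fderiv_le_div_of_mapsTo_ball hf (fun w hw => ?_) hr
  rw [mem_closedBall, dist_eq_norm]
  have h1 := hM w hw
  have h2 := hM z (mem_ball_self hr)
  linarith [norm_sub_le (f w) (f z)]

/-- Second-order Cauchy estimate: the Schwarz lemma applied to the first-order Taylor remainder. -/
theorem norm_taylor_le_of_ball {f : E → G} {z w : E} {r M : ℝ}
    (hf : DifferentiableOn ℂ f (ball z r)) (hM : ∀ w ∈ ball z r, ‖f w‖ ≤ M)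
    (hw : ‖w‖ < r) :
    ‖f (z + w) - f z - fderiv ℂ f z w‖ ≤ 4 * M * (‖w‖ / r) ^ 2 := by
  have hr : 0 < r := (norm_nonneg w).trans_lt hw
  have hd := norm_fderiv_le_of_ball hr hf hM
  have hz : DifferentiableAt ℂ f z := hf.differentiableAt (ball_mem_nhds z hr)
  have key := Complex.dist_le_mul_div_pow_of_mapsTo_ball_of_isLittleO (n := 1)
    (f := fun y => f y - f z - fderiv ℂ f z (y - z)) (c := z) (z := z + w) (R₁ := r) (R₂ := 4 * M)
    ?_ ?_ ?_ (by simpa using hw)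
  · simpa [dist_eq_norm] using key
  · exact (hf.sub_const _).sub (by fun_prop)
  · intro y hy
    have h1 := hM y hy
    have h2 := hM z (mem_ball_self hr)
    have h3 : ‖fderiv ℂ f z (y - z)‖ ≤ 2 * M / r * r :=
      (ContinuousLinearMap.le_opNorm _ _).trans
        (mul_le_mul hd (by rw [← dist_eq_norm]; exact hy.le) (norm_nonneg _)
          ((norm_nonneg _).trans hd))
    rw [div_mul_cancel₀ _ hr.ne'] at h3
    simp only [mem_closedBall, dist_eq_norm, sub_self, map_zero, sub_zero]
    linarith [norm_sub_le (f y - f z) (fderiv ℂ f z (y - z)), norm_sub_le (f y) (f z)]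
  · simpa using hz.hasFDerivAt.isLittleO.norm_right

theorem differentiableOn_finsetProd {ι : Type*} {k : ι → E → ℂ} {U : Set E} (s : Finset ι)
    (hk : ∀ i, DifferentiableOn ℂ (k i) U) : DifferentiableOn ℂ (fun x => ∏ i ∈ s, k i x) U := by
  classical
  induction s using Finset.induction_on with
  | empty => simp
  | insert i s hi ih =>
    simp only [Finset.prod_insert hi]
    exact (hk i).mul ih

/-- Directional derivatives of a holomorphic map of several variables are holomorphic. Locally they
are uniform limits of the holomorphic difference quotients `c (f (z + c⁻¹ v) - f z)`, and by the
Cauchy estimates the derivatives of these quotients converge uniformly as well. -/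
theorem differentiableOn_fderiv_apply [CompleteSpace G] {f : E → G} {U : Set E} (hU : IsOpen U)
    (hf : DifferentiableOn ℂ f U) (v : E) :
    DifferentiableOn ℂ (fun z => fderiv ℂ f z v) U := by
  intro a ha
  refine DifferentiableAt.differentiableWithinAt ?_
  -- a ball around `a` on which `f` is holomorphic and bounded
  obtain ⟨M, r, hr, hfr, hM⟩ : ∃ M r : ℝ, 0 < r ∧ DifferentiableOn ℂ f (ball a (4 * r)) ∧
      ∀ w ∈ ball a (4 * r), ‖f w‖ ≤ M := by
    have hc : ContinuousAt f a := hf.continuousOn.continuousAt (hU.mem_nhds ha)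
    have h1 : ∀ᶠ w in 𝓝 a, w ∈ U ∧ ‖f w‖ < ‖f a‖ + 1 :=
      (hU.eventually_mem ha).and (hc.norm.eventually_lt continuousAt_const (by simp))
    obtain ⟨ρ, hρ, h⟩ := Metric.eventually_nhds_iff_ball.1 h1
    refine ⟨‖f a‖ + 1, ρ / 4, by positivity, hf.mono fun w hw => (h w ?_).1,
      fun w hw => (h w ?_).2.le⟩ <;> simpa [mul_div_cancel₀] using hw
  have hM0 : 0 ≤ M := (norm_nonneg _).trans (hM a (mem_ball_self (by positivity)))
  obtain ⟨N, hN⟩ := exists_nat_gt (‖v‖ / r)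
  let c : ℕ → ℂ := fun k => ((k + N + 1 : ℕ) : ℂ)
  have hc0 : ∀ k, c k ≠ 0 := fun k => Nat.cast_ne_zero.2 (by omega)
  have hcn : ∀ k, ‖c k‖ = k + N + 1 := fun k => by
    simp only [c, Complex.norm_natCast]
    push_cast
    ring
  have hsmall : ∀ k, ‖(c k)⁻¹ • v‖ < r := by
    intro k
    rw [norm_smul, norm_inv, hcn, inv_mul_lt_iff₀ (by positivity)]
    rw [div_lt_iff₀ hr] at hN
    nlinarith [(Nat.cast_nonneg k : (0:ℝ) ≤ k)]
  let g : ℕ → E → G := fun k z => c k • (f (z + (c k)⁻¹ • v) - f z)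
  have hmem : ∀ k, ∀ z ∈ ball a (2 * r), z + (c k)⁻¹ • v ∈ ball a (4 * r) := by
    intro k z hz
    have := hsmall k
    rw [mem_ball, dist_eq_norm] at hz ⊢
    calc ‖z + (c k)⁻¹ • v - a‖ = ‖(z - a) + (c k)⁻¹ • v‖ := by congr 1; abel
      _ ≤ ‖z - a‖ + ‖(c k)⁻¹ • v‖ := norm_add_le _ _
      _ < 4 * r := by linarith
  have hg : ∀ k, DifferentiableOn ℂ (g k) (ball a (2 * r)) := by
    intro k
    refine ((hfr.comp (f := fun z => z + (c k)⁻¹ • v) (by fun_prop) (hmem k)).sub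
      (hfr.mono (ball_subset_ball (by linarith)))).const_smul _
  let C : ℝ := 4 * M * (‖v‖ / (2 * r)) ^ 2
  have hC0 : 0 ≤ C := by positivity
  have happ : ∀ k, ∀ z ∈ ball a (2 * r), ‖g k z - fderiv ℂ f z v‖ ≤ C / (k + 1) := by
    intro k z hz
    have hsub : ball z (2 * r) ⊆ ball a (4 * r) := ball_subset_ball' (by
      rw [mem_ball] at hz; linarith)
    have h := norm_taylor_le_of_ball (hfr.mono hsub) (fun w hw => hM w (hsub hw))
      ((hsmall k).trans (by linarith : r < 2 * r))
    have e : g k z - fderiv ℂ f z v =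
        c k • (f (z + (c k)⁻¹ • v) - f z - fderiv ℂ f z ((c k)⁻¹ • v)) := by
      simp only [g, map_smul, smul_sub, smul_inv_smul₀ (hc0 k)]
    rw [e, norm_smul]
    calc ‖c k‖ * _ ≤ ‖c k‖ * (4 * M * (‖(c k)⁻¹ • v‖ / (2 * r)) ^ 2) := by gcongr
      _ = C / ‖c k‖ := by
        have : ‖c k‖ ≠ 0 := norm_ne_zero_iff.2 (hc0 k)
        simp only [C, norm_smul, norm_inv]; field_simp
      _ ≤ C / (k + 1) := by
        rw [hcn]
        gcongr
        linarith [(Nat.cast_nonneg N : (0:ℝ) ≤ N)]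
  have hlim : Tendsto (fun k : ℕ => C / ((k : ℝ) + 1)) atTop (𝓝 0) := by
    simpa [div_eq_mul_inv] using (tendsto_one_div_add_atTop_nhds_zero_nat (𝕜 := ℝ)).const_mul C
  have hball : ∀ z ∈ ball a r, ball z r ⊆ ball a (2 * r) := fun z hz =>
    ball_subset_ball' (by rw [mem_ball] at hz; linarith)
  have hcauchy : UniformCauchySeqOn (fun k => fderiv ℂ (g k)) atTop (ball a r) := by
    rw [Metric.uniformCauchySeqOn_iff]
    intro ε hε
    have := (hlim.eventually (gt_mem_nhds (show 0 < ε * r / 8 by positivity)))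
    obtain ⟨K, hK⟩ := eventually_atTop.1 this
    refine ⟨K, fun m hm n hn z hz => ?_⟩
    have hdm : DifferentiableAt ℂ (g m) z :=
      (hg m).differentiableAt (isOpen_ball.mem_nhds (hball z hz (mem_ball_self hr)))
    have hdn : DifferentiableAt ℂ (g n) z :=
      (hg n).differentiableAt (isOpen_ball.mem_nhds (hball z hz (mem_ball_self hr)))
    rw [dist_eq_norm, ← fderiv_fun_sub hdm hdn]
    have hle := norm_fderiv_le_of_ball (f := fun w => g m w - g n w) (M := ε * r / 4) hr
      (((hg m).sub (hg n)).mono (hball z hz)) fun w hw => by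
        have h1 := happ m w (hball z hz hw)
        have h2 := happ n w (hball z hz hw)
        have h3 := hK m hm
        have h4 := hK n hn
        have := norm_sub_le (g m w - fderiv ℂ f w v) (g n w - fderiv ℂ f w v)
        rw [sub_sub_sub_cancel_right] at this
        linarith
    refine hle.trans_lt ?_
    rw [div_lt_iff₀ hr]
    nlinarith
  choose! g' hg' using fun z (hz : z ∈ ball a r) =>
    cauchySeq_tendsto_of_complete (hcauchy.cauchySeq hz)
  refine (hasFDerivAt_of_tendstoUniformlyOn (f := g) (l := atTop) (g' := g') isOpen_ball
    (hcauchy.tendstoUniformlyOn_of_tendsto hg')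
    (fun k z hz => ((hg k).differentiableAt
      (isOpen_ball.mem_nhds (hball z hz (mem_ball_self hr)))).hasFDerivAt)
    (fun z hz => ?_) (mem_ball_self hr)).differentiableAt
  rw [tendsto_iff_norm_sub_tendsto_zero]
  exact squeeze_zero (fun _ => norm_nonneg _)
    (fun k => happ k z (hball z hz (mem_ball_self hr))) hlim

theorem differentiableOn_fderiv [FiniteDimensional ℂ E] [CompleteSpace G] {f : E → G} {U : Set E}
    (hU : IsOpen U) (hf : DifferentiableOn ℂ f U) : DifferentiableOn ℂ (fderiv ℂ f) U := by
  let b := Module.finBasis ℂ E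
  have e : fderiv ℂ f = fun z => ∑ i, ContinuousLinearMap.smulRightL ℂ E G
      (LinearMap.toContinuousLinearMap (b.coord i)) (fderiv ℂ f z (b i)) := by
    ext z v
    conv_lhs => rw [← b.sum_repr v, map_sum]
    simp
  rw [e]
  refine DifferentiableOn.fun_sum fun i _ => ?_
  exact (ContinuousLinearMap.differentiable _).comp_differentiableOn
    (differentiableOn_fderiv_apply hU hf (b i))

theorem contDiffOn_one_of_differentiableOn [FiniteDimensional ℂ E] [CompleteSpace G] {f : E → G}
    {U : Set E} (hU : IsOpen U) (hf : DifferentiableOn ℂ f U) : ContDiffOn ℂ 1 f U := by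
  refine (contDiffOn_succ_iff_fderiv_of_isOpen (n := 0) hU).2 ⟨hf, by simp, ?_⟩
  exact contDiffOn_zero.2 (differentiableOn_fderiv hU hf).continuousOn
end Holomorphic

/-! ### Zero loci of holomorphic functions and injectivity -/

/-- Continuity of zeros: an isolated zero of `H (t, ·)` survives small changes of `t`. Otherwise the
maximum principle for `1 / H (t, ·)` would bound `|H|` from below at `p` by its values on a small
circle. -/
theorem eventually_exists_zero {H : ℂ × ℂ → ℂ} {U : Set (ℂ × ℂ)} (hU : IsOpen U)
    (hH : DifferentiableOn ℂ H U) {p : ℂ × ℂ} (hp : p ∈ U) (h0 : H p = 0)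
    (hne : ¬ ∀ᶠ s in 𝓝 p.2, H (p.1, s) = 0) {N : Set ℂ} (hN : N ∈ 𝓝 p.2) :
    ∀ᶠ t in 𝓝 p.1, ∃ s ∈ N, H (t, s) = 0 := by
  have hslice : ∀ t : ℂ, DifferentiableOn ℂ (fun s => H (t, s)) {s | (t, s) ∈ U} := fun t =>
    hH.comp (by fun_prop) fun s hs => hs
  have hopen : ∀ t : ℂ, IsOpen {s | (t, s) ∈ U} := fun t => hU.preimage (by fun_prop)
  have han : AnalyticAt ℂ (fun s => H (p.1, s)) p.2 :=
    (hslice p.1).analyticAt ((hopen p.1).mem_nhds hp)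
  have hne' := han.eventually_eq_zero_or_eventually_ne_zero.resolve_left hne
  rw [eventually_nhdsWithin_iff] at hne'
  obtain ⟨A, hA, B, hB, hAB⟩ := mem_nhds_prod_iff.1 (hU.mem_nhds (show (p.1, p.2) ∈ U from hp))
  obtain ⟨ε, hε, hball⟩ := nhds_basis_closedBall.mem_iff.1
    (inter_mem (inter_mem hB hN) hne')
  obtain ⟨c, hc, hcS⟩ : ∃ c > 0, ∀ s ∈ sphere p.2 ε, c < ‖H (p.1, s)‖ := by
    have hcont : ContinuousOn (fun s => ‖H (p.1, s)‖) (sphere p.2 ε) :=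
      ((hslice p.1).continuousOn.mono fun s hs =>
        hAB ⟨mem_of_mem_nhds hA, (hball (sphere_subset_closedBall hs)).1.1⟩).norm
    obtain ⟨s, hs, hmin⟩ := (isCompact_sphere p.2 ε).exists_isMinOn
      (NormedSpace.sphere_nonempty.2 hε.le) hcont
    have hpos : 0 < ‖H (p.1, s)‖ := norm_pos_iff.2
      ((hball (sphere_subset_closedBall hs)).2 (ne_of_mem_sphere hs hε.ne'))
    exact ⟨‖H (p.1, s)‖ / 2, by positivity, fun s' hs' => by
      have := hmin hs'
      simp only [mem_ofPred_eq] at this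
      linarith⟩
  have hcontAt : ∀ q ∈ U, ContinuousAt H q := fun q hq =>
    hH.continuousOn.continuousAt (hU.mem_nhds hq)
  have ev1 : ∀ᶠ t in 𝓝 p.1, ∀ s ∈ sphere p.2 ε, c < ‖H (t, s)‖ := by
    refine (isCompact_sphere p.2 ε).eventually_forall_of_forall_eventually fun s hs => ?_
    exact (hcontAt (p.1, s) (hAB ⟨mem_of_mem_nhds hA,
      (hball (sphere_subset_closedBall hs)).1.1⟩)).norm.eventually_const_lt (hcS s hs)
  have ev2 : ∀ᶠ t in 𝓝 p.1, ‖H (t, p.2)‖ < c := by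
    have : ContinuousAt (fun t => H (t, p.2)) p.1 :=
      ContinuousAt.comp (f := fun t => (t, p.2)) (hcontAt (p.1, p.2) hp) (by fun_prop)
    refine this.norm.eventually_lt_const ?_
    change ‖H (p.1, p.2)‖ < c
    rw [show H (p.1, p.2) = 0 from h0]
    simpa using hc
  filter_upwards [ev1, ev2, hA] with t h1 h2 htA
  by_contra! hcon
  have hsub : closedBall p.2 ε ⊆ {s | (t, s) ∈ U} := fun s hs => hAB ⟨htA, (hball hs).1.1⟩
  have hnz : ∀ s ∈ closedBall p.2 ε, H (t, s) ≠ 0 := fun s hs => hcon s (hball hs).1.2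
  have hd : DiffContOnCl ℂ (fun s => (H (t, s))⁻¹) (ball p.2 ε) := by
    refine DifferentiableOn.diffContOnCl ?_
    rw [closure_ball _ hε.ne']
    exact ((hslice t).mono hsub).inv hnz
  have hle := Complex.norm_le_of_forall_mem_frontier_norm_le isBounded_ball hd (C := c⁻¹)
    (fun s hs => by
      rw [frontier_ball _ hε.ne'] at hs
      rw [norm_inv]
      exact inv_anti₀ hc (h1 s hs).le) (subset_closure (mem_ball_self hε))
  rw [norm_inv] at hle
  have := (inv_le_inv₀ (norm_pos_iff.2 (hnz p.2 (mem_closedBall_self hε.le))) hc).1 hle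
  linarith

/-- If `H` vanishes at `p`, but not identically on the vertical line through `p`, then the zero set of
`H` contains the graph of a holomorphic function. Among all zeros `q` choose one for which the first
nonvanishing vertical derivative has minimal order `k + 1`. By minimality `∂ₛᵏ H` vanishes on all
zeros of `H`, and by the implicit function theorem its own zero set near `q` is a graph; the zeros
of `H` near `q`, which exist over every `t` by continuity of zeros, make up this whole graph. -/
theorem exists_zero_curve {H : ℂ × ℂ → ℂ} {U : Set (ℂ × ℂ)} (hU : IsOpen U)
    (hH : DifferentiableOn ℂ H U) {p : ℂ × ℂ} (hp : p ∈ U) (h0 : H p = 0)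
    (hne : ¬ ∀ᶠ s in 𝓝 p.2, H (p.1, s) = 0) :
    ∃ (t₀ : ℂ) (φ : ℂ → ℂ), ∀ᶠ t in 𝓝 t₀,
      (t, φ t) ∈ U ∧ H (t, φ t) = 0 ∧ DifferentiableAt ℂ φ t := by
  let Hm : ℕ → ℂ × ℂ → ℂ := fun m => (fun K p => fderiv ℂ K p (0, 1))^[m] H
  have hsucc : ∀ m, Hm (m + 1) = fun p => fderiv ℂ (Hm m) p (0, 1) := fun m =>
    Function.iterate_succ_apply' _ _ _
  have hdiff : ∀ m, DifferentiableOn ℂ (Hm m) U := by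
    intro m
    induction m with
    | zero => exact hH
    | succ m ih => rw [hsucc]; exact differentiableOn_fderiv_apply hU ih _
  have hopen : ∀ t : ℂ, IsOpen {s | (t, s) ∈ U} := fun t => hU.preimage (by fun_prop)
  have hslice : ∀ m (t : ℂ), DifferentiableOn ℂ (fun s => Hm m (t, s)) {s | (t, s) ∈ U} :=
    fun m t => (hdiff m).comp (by fun_prop) fun s hs => hs
  have hiter : ∀ m (t s : ℂ), (t, s) ∈ U →
      iteratedDeriv m (fun s => H (t, s)) s = Hm m (t, s) := by
    intro m t
    induction m with
    | zero => intro s _; simp [Hm]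
    | succ m ih =>
      intro s hs
      have : iteratedDeriv m (fun s => H (t, s)) =ᶠ[𝓝 s] fun s => Hm m (t, s) := by
        filter_upwards [(hopen t).mem_nhds hs] with s' hs' using ih s' hs'
      rw [iteratedDeriv_succ, this.deriv_eq, hsucc]
      have hd := ((hdiff m).differentiableAt (hU.mem_nhds hs)).hasFDerivAt
      exact (hd.comp_hasDerivAt s ((hasDerivAt_const s t).prodMk (hasDerivAt_id s))).deriv
  -- the vertical Taylor coefficients at a point detect vertical vanishing
  have htaylor : ∀ q ∈ U, (∀ m, Hm m q = 0) → ∀ᶠ s in 𝓝 q.2, H (q.1, s) = 0 := by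
    intro q hq hz
    obtain ⟨r, hr, hball⟩ := Metric.isOpen_iff.1 (hopen q.1) q.2 hq
    filter_upwards [ball_mem_nhds q.2 hr] with s hs
    have e := Complex.taylorSeries_eq_on_ball' hs ((hslice 0 q.1).mono hball)
    change _ = H (q.1, s) at e
    change ∑' m : ℕ, (m.factorial : ℂ)⁻¹ * iteratedDeriv m (fun s => H (q.1, s)) q.2 *
      (s - q.2) ^ m = _ at e
    rw [← e]
    simp [fun m => hiter m q.1 q.2 hq, hz]
  have hex : ∃ m, ∃ q ∈ U, H q = 0 ∧ Hm m q ≠ 0 := by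
    by_contra! hcon
    exact hne (htaylor p hp fun m => hcon m p hp h0)
  classical
  obtain ⟨q, hq, hq0, hqm⟩ := Nat.find_spec hex
  have hmin := fun k => Nat.find_min (H := hex) (m := k)
  -- the minimal order is positive, since `H` itself vanishes at `q`
  obtain ⟨k, hk⟩ : ∃ k, Nat.find hex = k + 1 := by
    refine Nat.exists_eq_succ_of_ne_zero fun h => hqm ?_
    rw [h]; exact hq0
  rw [hk] at hqm hmin
  have hvan : ∀ z ∈ U, H z = 0 → Hm k z = 0 := by
    intro z hz hz0
    by_contra hcon
    exact hmin k (Nat.lt_succ_self k) ⟨z, hz, hz0, hcon⟩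
  have cdf : ContDiffAt ℂ 1 (Hm k) q :=
    (contDiffOn_one_of_differentiableOn hU (hdiff k)).contDiffAt (hU.mem_nhds hq)
  rw [hsucc] at hqm
  have inv : (fderiv ℂ (Hm k) q ∘L .inr ℂ ℂ ℂ).IsInvertible := by
    refine ⟨ContinuousLinearEquiv.unitsEquivAut ℂ (Units.mk0 _ hqm), ?_⟩
    ext
    simp
  have hvne : ¬ ∀ᶠ s in 𝓝 q.2, H (q.1, s) = 0 := by
    intro hev
    apply hqm
    have : (fun s => H (q.1, s)) =ᶠ[𝓝 q.2] fun _ => (0 : ℂ) := hev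
    have h2 := this.iteratedDeriv_eq (k + 1)
    rw [hiter (k + 1) q.1 q.2 hq, hsucc] at h2
    simpa using h2
  let φ := cdf.implicitFunction one_ne_zero inv
  refine ⟨q.1, φ, ?_⟩
  have hiff : ∀ᶠ v in 𝓝 q.1 ×ˢ 𝓝 q.2, v ∈ U ∧ (Hm k v = Hm k q ↔ φ v.1 = v.2) := by
    rw [← nhds_prod_eq]
    exact (hU.eventually_mem hq).and
      (cdf.eventually_apply_eq_iff_implicitFunction one_ne_zero inv)
  obtain ⟨pa, ha, pb, hb, hab⟩ := eventually_prod_iff.1 hiff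
  have hzero := eventually_exists_zero hU hH hq hq0 hvne (N := {s | pb s}) hb
  have hsm := (cdf.contDiffAt_implicitFunction one_ne_zero inv).eventually (by simp)
  filter_upwards [ha, hzero, hsm] with t hta ⟨s, hs, hts⟩ htd
  have h := hab hta hs
  have h3 : φ t = s := h.2.1 (by rw [hvan _ h.1 hts, hvan _ hq hq0])
  rw [h3]
  exact ⟨h.1, hts, htd.differentiableAt one_ne_zero⟩

/-- In dimension at least two, the derivative of an injective holomorphic map cannot vanish on the
nonempty zero set of a holomorphic function: this set contains a holomorphic curve, along which the
map would be constant. -/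
theorem injOn_false_of_zero_locus {E G : Type*} [NormedAddCommGroup E] [NormedSpace ℂ E]
    [FiniteDimensional ℂ E] [NormedAddCommGroup G] [NormedSpace ℂ G]
    {f : E → G} {h : E → ℂ} {U : Set E} (hU : IsOpen U) (hE : 2 ≤ Module.finrank ℂ E)
    (hf : DifferentiableOn ℂ f U) (hh : DifferentiableOn ℂ h U) (hinj : InjOn f U)
    (hz : ∀ x ∈ U, h x = 0 → fderiv ℂ f x = 0) {a : E} (ha : a ∈ U) (ha0 : h a = 0) : False := by
  obtain ⟨r, hr, hball⟩ := Metric.isOpen_iff.1 hU a ha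
  have hnt : Nontrivial E := Module.finrank_pos_iff (R := ℂ).1 (by omega)
  obtain ⟨b, hb, hb0⟩ : ∃ b ∈ ball a r, h b ≠ 0 := by
    by_contra! hcon
    obtain ⟨e, he⟩ := NormedSpace.exists_lt_norm ℂ E 0
    have hc : a + ((r / 2 / ‖e‖ : ℝ) : ℂ) • e ∈ ball a r := by
      simp [norm_smul, abs_of_pos hr, he.ne']
      linarith
    have heq := isOpen_ball.is_const_of_fderiv_eq_zero (convex_ball a r).isPreconnected
      (hf.mono hball) (fun x hx => hz x (hball hx) (hcon x hx)) hc (mem_ball_self hr)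
    have := hinj (hball hc) ha heq
    rw [add_eq_left, smul_eq_zero] at this
    rcases this with h1 | h1
    · have : r / 2 / ‖e‖ ≠ 0 := by positivity
      exact this (by exact_mod_cast h1)
    · simp [h1] at he
  have hv : b - a ≠ 0 := fun h1 => hb0 (by rw [sub_eq_zero.1 h1, ha0])
  obtain ⟨w, hw⟩ : ∃ w, w ∉ Submodule.span ℂ {b - a} := by
    by_contra! hcon
    have h1 : Submodule.span ℂ {b - a} = ⊤ := Submodule.eq_top_iff'.2 hcon
    have h2 := finrank_span_singleton (K := ℂ) hv
    rw [h1, finrank_top] at h2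
    omega
  -- a plane through `a` containing a vertical direction in which `h` does not vanish identically
  let ι : ℂ × ℂ → E := fun p => a + p.2 • (b - a) + p.1 • w
  have hι : Differentiable ℂ ι := by fun_prop
  have hfst : ∀ p q : ℂ × ℂ, ι p = ι q → p.1 = q.1 := by
    intro p q hpq
    by_contra hne
    apply hw
    have hd : p.1 - q.1 ≠ 0 := sub_ne_zero.2 hne
    have : w = ((p.1 - q.1)⁻¹ * (q.2 - p.2)) • (b - a) := by
      have h3 : (p.1 - q.1) • w = (q.2 - p.2) • (b - a) := by
        simp only [ι] at hpq
        linear_combination (norm := module) hpq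
      rw [mul_smul, ← h3, inv_smul_smul₀ hd]
    rw [this]
    exact Submodule.smul_mem _ _ (Submodule.mem_span_singleton_self _)
  have hU' : IsOpen (ι ⁻¹' U) := hU.preimage hι.continuous
  have hH : DifferentiableOn ℂ (h ∘ ι) (ι ⁻¹' U) := hh.comp hι.differentiableOn fun _ hx => hx
  have hι0 : ι (0, 0) = a := by simp [ι]
  obtain ⟨t₀, φ, hφ⟩ := exists_zero_curve hU' hH (p := (0, 0)) (by simpa [hι0] using ha)
    (by simpa [hι0] using ha0) (by
      intro hev
      let κ : ℂ → E := fun s => a + s • (b - a)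
      have hκ : Differentiable ℂ κ := by fun_prop
      have hconv : Convex ℝ (κ ⁻¹' ball a r) := by
        have e : κ ⁻¹' ball a r = ball 0 (r / ‖b - a‖) := by
          ext s
          simp [κ, norm_smul, lt_div_iff₀ (norm_pos_iff.2 hv)]
        rw [e]
        exact convex_ball _ _
      have hd : DifferentiableOn ℂ (h ∘ κ) (κ ⁻¹' ball a r) :=
        (hh.mono hball).comp hκ.differentiableOn fun _ hx => hx
      have ho : IsOpen (κ ⁻¹' ball a r) := isOpen_ball.preimage hκ.continuous
      have h1 := (hd.analyticOnNhd ho).eqOn_zero_of_preconnected_of_eventuallyEq_zero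
        hconv.isPreconnected (z₀ := 0) (by simp [κ, hr]) (by
          filter_upwards [hev] with s hs
          simpa [ι, κ] using hs)
      have h2 : (h ∘ κ) 1 = 0 := h1 (by simpa [κ] using hb)
      exact hb0 (by simpa [κ] using h2))
  obtain ⟨δ, hδ, hδφ⟩ := Metric.eventually_nhds_iff_ball.1 hφ
  have hder : ∀ t ∈ ball t₀ δ, HasDerivAt (fun t => f (ι (t, φ t))) 0 t := by
    intro t ht
    obtain ⟨h1, h2, h3⟩ := hδφ t ht
    have hcurve : DifferentiableAt ℂ (fun t => ι (t, φ t)) t :=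
      (hι _).comp t (differentiableAt_id.prodMk h3)
    have hfd := (hf.differentiableAt (hU.mem_nhds h1)).hasFDerivAt
    rw [hz _ h1 h2] at hfd
    simpa [Function.comp_def] using hfd.comp_hasDerivAt t hcurve.hasDerivAt
  have ht1 : t₀ + ((δ / 2 : ℝ) : ℂ) ∈ ball t₀ δ := by
    simp [abs_of_pos hδ, hδ]
  have heq := isOpen_ball.is_const_of_deriv_eq_zero (convex_ball t₀ δ).isPreconnected
    (fun t ht => (hder t ht).differentiableAt.differentiableWithinAt)
    (fun t ht => (hder t ht).deriv) ht1 (mem_ball_self hδ)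
  have := hfst _ _ (hinj (hδφ _ ht1).1 (hδφ _ (mem_ball_self hδ)).1 heq)
  simp [hδ.ne'] at this

/-- The one-dimensional case of Osgood's theorem. If `deriv g a = 0`, then this zero is isolated;
the maximum principle for the inverse of the difference quotient bounds `|deriv g t|` from below
for `t ≠ a` near `a`, contradicting continuity. -/
theorem deriv_ne_zero_of_injOn {g : ℂ → ℂ} {U : Set ℂ} (hU : IsOpen U)
    (hg : DifferentiableOn ℂ g U) (hinj : InjOn g U) {a : ℂ} (ha : a ∈ U) : deriv g a ≠ 0 := by
  intro h0
  have hg' : DifferentiableOn ℂ (deriv g) U := hg.deriv hU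
  have hne : ¬ ∀ᶠ z in 𝓝 a, deriv g z = 0 := by
    intro hev
    obtain ⟨r, hr, hball⟩ := Metric.eventually_nhds_iff_ball.1 (hev.and (hU.eventually_mem ha))
    have hc : a + ((r / 2 : ℝ) : ℂ) ∈ ball a r := by simp [abs_of_pos hr, hr]
    have heq := isOpen_ball.is_const_of_deriv_eq_zero (convex_ball a r).isPreconnected
      (hg.mono fun z hz => (hball z hz).2) (fun z hz => (hball z hz).1) hc (mem_ball_self hr)
    have := hinj (hball _ hc).2 ha heq
    simp [hr.ne'] at this
  have hne' :=
    (hg'.analyticAt (hU.mem_nhds ha)).eventually_eq_zero_or_eventually_ne_zero.resolve_left hne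
  rw [eventually_nhdsWithin_iff] at hne'
  obtain ⟨ε, hε, hball⟩ := nhds_basis_closedBall.mem_iff.1 (inter_mem (hU.mem_nhds ha) hne')
  have hcg : ∀ z ∈ U, ContinuousAt g z := fun z hz => hg.continuousOn.continuousAt (hU.mem_nhds hz)
  obtain ⟨c, hc, hcS⟩ : ∃ c > 0, ∀ s ∈ sphere a ε, c < ‖g s - g a‖ := by
    have hcont : ContinuousOn (fun s => ‖g s - g a‖) (sphere a ε) :=
      ((hg.continuousOn.mono fun s hs => (hball (sphere_subset_closedBall hs)).1).sub
        continuousOn_const).norm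
    obtain ⟨s, hs, hmin⟩ := (isCompact_sphere a ε).exists_isMinOn
      (NormedSpace.sphere_nonempty.2 hε.le) hcont
    have hpos : 0 < ‖g s - g a‖ := norm_pos_iff.2 (sub_ne_zero.2 fun h =>
      ne_of_mem_sphere hs hε.ne' (hinj (hball (sphere_subset_closedBall hs)).1 ha h))
    exact ⟨‖g s - g a‖ / 2, by positivity, fun s' hs' => by
      have := hmin hs'
      simp only [mem_ofPred_eq] at this
      linarith⟩
  have ev1 : ∀ᶠ t in 𝓝 a, ‖g t - g a‖ < c / 2 := by
    refine ((hcg a ha).sub continuousAt_const).norm.eventually_lt_const ?_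
    simpa using half_pos hc
  -- for `t ≠ a` the difference quotient has no zero, so its inverse obeys the maximum principle
  have key : ∀ᶠ t in 𝓝[≠] a, c / (4 * ε) ≤ ‖deriv g t‖ := by
    filter_upwards [nhdsWithin_le_nhds ev1, nhdsWithin_le_nhds (closedBall_mem_nhds a hε),
      self_mem_nhdsWithin] with t ht htb hta
    have hd : DifferentiableOn ℂ (dslope g t) U :=
      (Complex.differentiableOn_dslope (hU.mem_nhds (hball htb).1)).2 hg
    have hnz : ∀ s ∈ closedBall a ε, dslope g t s ≠ 0 := by
      intro s hs
      rcases eq_or_ne s t with rfl | hst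
      · rw [dslope_same]; exact (hball htb).2 hta
      · rw [dslope_of_ne _ hst, slope_def_field]
        exact div_ne_zero (sub_ne_zero.2 fun h => hst (hinj (hball hs).1 (hball htb).1 h))
          (sub_ne_zero.2 hst)
    have hdc : DiffContOnCl ℂ (fun s => (dslope g t s)⁻¹) (ball a ε) := by
      refine DifferentiableOn.diffContOnCl ?_
      rw [closure_ball _ hε.ne']
      exact (hd.mono fun s hs => (hball hs).1).inv hnz
    have hle := Complex.norm_le_of_forall_mem_frontier_norm_le isBounded_ball hdc
      (C := (c / (4 * ε))⁻¹) (fun s hs => by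
        rw [frontier_ball _ hε.ne'] at hs
        rw [norm_inv]
        refine inv_anti₀ (by positivity) ?_
        have h1 := hcS s hs
        have hst : s ≠ t := by
          rintro rfl
          linarith
        rw [dslope_of_ne _ hst, slope_def_field, norm_div]
        have h2 : ‖s - t‖ ≤ 2 * ε := by
          have h3 : ‖s - a‖ = ε := by simpa [dist_eq_norm] using hs
          have h4 : ‖t - a‖ ≤ ε := by simpa [dist_eq_norm] using htb
          have := norm_sub_le (s - a) (t - a)
          rw [sub_sub_sub_cancel_right] at this
          linarith
        have h5 : c / 2 ≤ ‖g s - g t‖ := by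
          have := norm_sub_le_norm_sub_add_norm_sub (g s) (g t) (g a)
          linarith
        rw [le_div_iff₀ (norm_pos_iff.2 (sub_ne_zero.2 hst)), div_mul_eq_mul_div,
          div_le_iff₀ (by positivity)]
        nlinarith) (show t ∈ closure (ball a ε) by rwa [closure_ball _ hε.ne'])
    rw [norm_inv, dslope_same] at hle
    refine (inv_le_inv₀ (norm_pos_iff.2 ((hball htb).2 hta)) (by positivity)).1 hle
  have hlim : Tendsto (fun t => ‖deriv g t‖) (𝓝[≠] a) (𝓝 0) := by
    have : ContinuousAt (deriv g) a := hg'.continuousOn.continuousAt (hU.mem_nhds ha)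
    have h1 := (this.norm).tendsto.mono_left (nhdsWithin_le_nhds (s := {a}ᶜ))
    rwa [h0, norm_zero] at h1
  have := ge_of_tendsto hlim key
  have h3 : 0 < c / (4 * ε) := by positivity
  linarith

/-! ### Osgood's theorem -/

/-- Induction step for Osgood's theorem at a point where the derivative is not zero. Take a linear
form `ℓ` with `ℓ ∘ f'(a) ≠ 0`; the induction hypothesis applies to `f` as a map from the smooth
hypersurface `ℓ ∘ f = ℓ (f a)` to a hyperplane, and every vector killed by `f'(a)` is tangent to this
hypersurface. -/
theorem fderiv_injective_step {d : ℕ}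
    (IH : ∀ (E F : Type) [NormedAddCommGroup E] [NormedSpace ℂ E] [FiniteDimensional ℂ E]
      [NormedAddCommGroup F] [NormedSpace ℂ F] [FiniteDimensional ℂ F],
      Module.finrank ℂ E = d → Module.finrank ℂ F = d → ∀ (f : E → F) (U : Set E), IsOpen U →
      DifferentiableOn ℂ f U → InjOn f U → ∀ a ∈ U, ∀ v, fderiv ℂ f a v = 0 → v = 0)
    {E F : Type} [NormedAddCommGroup E] [NormedSpace ℂ E] [FiniteDimensional ℂ E]
    [NormedAddCommGroup F] [NormedSpace ℂ F] [FiniteDimensional ℂ F]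
    (hE : Module.finrank ℂ E = d + 1) (hF : Module.finrank ℂ F = d + 1)
    {f : E → F} {U : Set E} (hU : IsOpen U) (hf : DifferentiableOn ℂ f U) (hinj : InjOn f U)
    {a : E} (ha : a ∈ U) (h0 : fderiv ℂ f a ≠ 0) : ∀ v, fderiv ℂ f a v = 0 → v = 0 := by
  obtain ⟨w, hw⟩ : ∃ w, fderiv ℂ f a w ≠ 0 := by
    by_contra! hcon
    exact h0 (ContinuousLinearMap.ext hcon)
  obtain ⟨ℓ, hℓ⟩ := SeparatingDual.exists_eq_one (R := ℂ) hw
  set u := fderiv ℂ f a w with hu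
  set lam : E →L[ℂ] ℂ := ℓ ∘L fderiv ℂ f a with hlam
  have hlamw : lam w = 1 := hℓ
  have hstrict : ∀ {f : E → F} , DifferentiableOn ℂ f U → HasStrictFDerivAt f (fderiv ℂ f a) a :=
    fun hf => ((contDiffOn_one_of_differentiableOn hU hf).contDiffAt
      (hU.mem_nhds ha)).hasStrictFDerivAt one_ne_zero
  -- a change of coordinates straightening the level set of `ℓ ∘ f` through `a`
  let Ψ : E → E := fun x => x + (ℓ (f x) - ℓ (f a) - lam (x - a)) • w
  have hΨa : Ψ a = a := by simp [Ψ]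
  have hΨU : DifferentiableOn ℂ Ψ U := by
    have := ℓ.differentiable.comp_differentiableOn hf
    simp only [Function.comp_def] at this
    fun_prop
  have hΨc : ContDiffAt ℂ 1 Ψ a :=
    (contDiffOn_one_of_differentiableOn hU hΨU).contDiffAt (hU.mem_nhds ha)
  have hΨd : HasFDerivAt Ψ ((ContinuousLinearEquiv.refl ℂ E : E ≃L[ℂ] E) : E →L[ℂ] E) a := by
    have h1 := (hf.differentiableAt (hU.mem_nhds ha)).hasFDerivAt
    have h2 := ((ℓ.hasFDerivAt.comp a h1).sub_const (ℓ (f a))).sub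
      (lam.hasFDerivAt.comp a ((hasFDerivAt_id a).sub_const a))
    have h3 := (hasFDerivAt_id a).add (h2.smul_const w)
    refine h3.congr_fderiv ?_
    ext x
    simp [lam]
  have hs : HasStrictFDerivAt Ψ ((ContinuousLinearEquiv.refl ℂ E : E ≃L[ℂ] E) : E →L[ℂ] E) a :=
    hΨc.hasStrictFDerivAt' hΨd one_ne_zero
  let χ := hs.localInverse
  have hχa : χ a = a := by
    have := hs.localInverse_apply_image
    rwa [hΨa] at this
  have hχd : HasStrictFDerivAt χ ((ContinuousLinearEquiv.refl ℂ E : E ≃L[ℂ] E) : E →L[ℂ] E) a := by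
    have := hs.to_localInverse
    rwa [hΨa] at this
  have hχc : ContDiffAt ℂ 1 χ a := by
    have := hΨc.to_localInverse hΨd one_ne_zero
    rwa [hΨa] at this
  have hχr : ∀ᶠ z in 𝓝 a, Ψ (χ z) = z := by
    have := hs.eventually_right_inverse
    rwa [hΨa] at this
  have hχU : ∀ᶠ z in 𝓝 a, χ z ∈ U := by
    refine hχc.continuousAt.eventually_mem ?_
    rw [hχa]
    exact hU.mem_nhds ha
  have hev := hχr.and (hχU.and (hχc.eventually (by simp)))
  obtain ⟨V, hV, hVo, hVa⟩ := _root_.eventually_nhds_iff.1 hev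
  let ι : lam.ker → E := fun y => a + y
  have hι : Differentiable ℂ ι := by
    have : Differentiable ℂ (fun y : lam.ker => (y : E)) := lam.ker.subtypeL.differentiable
    fun_prop
  let π : F →L[ℂ] ℓ.ker := (ContinuousLinearMap.id ℂ F - ℓ.smulRight u).codRestrict ℓ.ker (by
    intro x
    simp [hℓ])
  have hπ : ∀ x, ((π x : ℓ.ker) : F) = x - ℓ x • u := fun x => by simp [π]
  let g : lam.ker → ℓ.ker := fun y => π (f (χ (ι y)))
  have hlev : ∀ y : lam.ker, ι y ∈ V → ℓ (f (χ (ι y))) = ℓ (f a) := by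
    intro y hy
    have h1 := (hV _ hy).1
    have h2 := congrArg (fun z => lam (z - a)) h1
    have hy0 : lam (y : E) = 0 := y.2
    simp only [Ψ, ι, map_sub, map_add, map_smul, hlamw, smul_eq_mul, mul_one, hy0] at h2
    simp only [ι]
    linear_combination h2
  have hgd : DifferentiableOn ℂ g (ι ⁻¹' V) := by
    intro y hy
    have h1 : DifferentiableAt ℂ χ (ι y) := (hV _ hy).2.2.differentiableAt one_ne_zero
    have h2 : DifferentiableAt ℂ f (χ (ι y)) := hf.differentiableAt (hU.mem_nhds (hV _ hy).2.1)
    exact (π.differentiableAt.comp y (h2.comp y (h1.comp y (hι y)))).differentiableWithinAt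
  have hginj : InjOn g (ι ⁻¹' V) := by
    intro y₁ h₁ y₂ h₂ h
    have e := congrArg (fun z : ℓ.ker => (z : F)) h
    simp only [g, hπ, hlev y₁ h₁, hlev y₂ h₂] at e
    have e2 := hinj (hV _ h₁).2.1 (hV _ h₂).2.1 (sub_left_inj.1 e)
    have e3 : ι y₁ = ι y₂ := by rw [← (hV _ h₁).1, ← (hV _ h₂).1, e2]
    exact Subtype.ext (add_left_cancel e3)
  have hlam0 : lam.toLinearMap ≠ 0 := fun h => by
    have := congrArg (fun m : E →ₗ[ℂ] ℂ => m w) h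
    simp [hlamw] at this
  have hℓ0 : ℓ.toLinearMap ≠ 0 := fun h => by
    have := congrArg (fun m : F →ₗ[ℂ] ℂ => m u) h
    simp [hℓ] at this
  have hι0 : ι 0 = a := by simp [ι]
  have key := IH lam.ker ℓ.ker
    (by have := Module.Dual.finrank_ker_add_one_of_ne_zero hlam0; rw [hE] at this
        exact Nat.succ_injective this)
    (by have := Module.Dual.finrank_ker_add_one_of_ne_zero hℓ0; rw [hF] at this
        exact Nat.succ_injective this)
    g (ι ⁻¹' V) (hVo.preimage hι.continuous) hgd hginj 0 (by simpa [hι0] using hVa)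
  have hder : HasFDerivAt g (π ∘L fderiv ℂ f a ∘L lam.ker.subtypeL) 0 := by
    have h1 : HasFDerivAt ι lam.ker.subtypeL 0 := lam.ker.subtypeL.hasFDerivAt.const_add a
    have h2 : HasFDerivAt χ (ContinuousLinearMap.id ℂ E) (ι 0) := by
      rw [hι0]; exact hχd.hasFDerivAt
    have h3 : HasFDerivAt f (fderiv ℂ f a) (χ (ι 0)) := by
      rw [hι0, hχa]; exact (hf.differentiableAt (hU.mem_nhds ha)).hasFDerivAt
    exact π.hasFDerivAt.comp 0 (h3.comp 0 (h2.comp 0 h1))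
  rw [hder.fderiv] at key
  intro v hv
  have hvk : v ∈ lam.ker := by simp [lam, hv]
  have := key ⟨v, hvk⟩ (by simp [hv])
  simpa using this

/-- Osgood's theorem: an injective holomorphic map between spaces of equal finite dimension is
an immersion. At a point where `f'` is singular it vanishes, by the induction step, so `f'` vanishes
on the zero set of `det f'`; in dimension at least two this contradicts injectivity. -/
theorem fderiv_injective_of_injOn (d : ℕ) : ∀ (E F : Type) [NormedAddCommGroup E]
      [NormedSpace ℂ E] [FiniteDimensional ℂ E]
      [NormedAddCommGroup F] [NormedSpace ℂ F] [FiniteDimensional ℂ F],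
      Module.finrank ℂ E = d → Module.finrank ℂ F = d → ∀ (f : E → F) (U : Set E), IsOpen U →
      DifferentiableOn ℂ f U → InjOn f U → ∀ a ∈ U, ∀ v, fderiv ℂ f a v = 0 → v = 0 := by
  induction d with
  | zero =>
    intro E F _ _ _ _ _ _ hE _ f U _ _ _ a _ v _
    have := Module.finrank_zero_iff.1 hE
    exact Subsingleton.elim _ _
  | succ d IH =>
    intro E F _ _ _ _ _ _ hE hF f U hU hf hinj a ha
    by_cases h0 : fderiv ℂ f a ≠ 0
    · exact fderiv_injective_step IH hE hF hU hf hinj ha h0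
    exfalso
    push Not at h0
    obtain rfl | hd : d = 0 ∨ 1 ≤ d := by omega
    · let e₁ : ℂ ≃L[ℂ] E := ContinuousLinearEquiv.ofFinrankEq (by simp [hE])
      let e₂ : F ≃L[ℂ] ℂ := ContinuousLinearEquiv.ofFinrankEq (by simp [hF])
      have hg : DifferentiableOn ℂ (fun t => e₂ (f (e₁ t))) (e₁ ⁻¹' U) :=
        e₂.differentiable.comp_differentiableOn
          (hf.comp e₁.differentiable.differentiableOn fun _ hx => hx)
      refine deriv_ne_zero_of_injOn (hU.preimage e₁.continuous) hg ?_ (a := e₁.symm a)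
        (by simpa using ha) ?_
      · intro s hs t ht hst
        exact e₁.injective (hinj hs ht (e₂.injective hst))
      · have h1 : HasFDerivAt f (0 : E →L[ℂ] F) (e₁ (e₁.symm a)) := by
          rw [e₁.apply_symm_apply, ← h0]
          exact (hf.differentiableAt (hU.mem_nhds ha)).hasFDerivAt
        have h2 := h1.comp_hasDerivAt _ e₁.toContinuousLinearMap.hasDerivAt
        have h3 := e₂.toContinuousLinearMap.hasFDerivAt.comp_hasDerivAt _ h2
        simpa [Function.comp_def] using h3.deriv
    · let e : F ≃L[ℂ] E := ContinuousLinearEquiv.ofFinrankEq (by rw [hE, hF])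
      let b := Module.finBasis ℂ E
      let T : E → (E →L[ℂ] E) := fun x => e.toContinuousLinearMap ∘L fderiv ℂ f x
      refine injOn_false_of_zero_locus (h := fun x => LinearMap.det (T x).toLinearMap) hU
        (by omega) hf ?_ hinj ?_ ha ?_
      · have : (fun x => LinearMap.det (T x).toLinearMap) = fun x =>
            (LinearMap.toMatrix b b (T x).toLinearMap).det := by
          ext x
          rw [LinearMap.det_toMatrix]
        rw [this]
        simp only [Matrix.det_apply, LinearMap.toMatrix_apply]
        refine DifferentiableOn.fun_sum fun σ _ => DifferentiableOn.const_smul ?_ _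
        refine differentiableOn_finsetProd _ fun i => ?_
        have h1 := differentiableOn_fderiv_apply hU hf (b i)
        have h2 : Differentiable ℂ fun y : F => b.repr (e y) (σ i) :=
          ((LinearMap.toContinuousLinearMap (b.coord (σ i))) ∘L
            e.toContinuousLinearMap).differentiable
        exact h2.comp_differentiableOn h1
      · intro x hx hdet
        by_contra hne
        have hker := LinearMap.bot_lt_ker_of_det_eq_zero hdet
        obtain ⟨v, hv, hv0⟩ := Submodule.exists_mem_ne_zero_of_ne_bot hker.ne'
        refine hv0 (fderiv_injective_step IH hE hF hU hf hinj hx hne v ?_)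
        simpa [T] using hv
      · have : Nontrivial E := Module.finrank_pos_iff (R := ℂ).1 (by omega)
        simp [T, h0]

section Inverse
variable {E : Type} [NormedAddCommGroup E] [NormedSpace ℂ E] [FiniteDimensional ℂ E]

theorem exists_equiv_of_injOn {f : E → E} {U : Set E} (hU : IsOpen U)
    (hf : DifferentiableOn ℂ f U) (hinj : InjOn f U) {a : E} (ha : a ∈ U) :
    ∃ A : E ≃L[ℂ] E, (A : E →L[ℂ] E) = fderiv ℂ f a := by
  have h := fderiv_injective_of_injOn _ E E rfl rfl f U hU hf hinj a ha
  have hi : Function.Injective (fderiv ℂ f a).toLinearMap :=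
    (injective_iff_map_eq_zero _).2 h
  refine ⟨(LinearEquiv.ofInjectiveEndo _ hi).toContinuousLinearEquiv, ?_⟩
  ext x
  simp

/-- The inverse of an injective holomorphic map from an open set to the same space is holomorphic. -/
theorem holomorphic_inverse {f : E → E} {U : Set E} (hU : IsOpen U)
    (hf : DifferentiableOn ℂ f U) (hinj : InjOn f U) {G : E → E} (hG : ∀ z ∈ U, G (f z) = z) :
    DifferentiableOn ℂ G (f '' U) := by
  rintro _ ⟨a, ha, rfl⟩
  obtain ⟨A, hA⟩ := exists_equiv_of_injOn hU hf hinj ha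
  have hs : HasStrictFDerivAt f (A : E →L[ℂ] E) a := by
    rw [hA]
    exact ((contDiffOn_one_of_differentiableOn hU hf).contDiffAt
      (hU.mem_nhds ha)).hasStrictFDerivAt one_ne_zero
  have h := hs.to_local_left_inverse (g := G)
    (by filter_upwards [hU.mem_nhds ha] with z hz using hG z hz)
  exact h.hasFDerivAt.differentiableAt.differentiableWithinAt
end Inverse

/-! ### Fields integrable by automorphisms -/

section Fields
variable {n : ℕ}
local notation "𝔼" => EuclideanSpace ℂ (Fin n)

theorem IsAutCn.id : IsAutCn n (fun z => z) :=
  ⟨differentiable_id, fun z => z, differentiable_id, fun _ => rfl, fun _ => rfl⟩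

theorem IsAutCn.comp {f g : 𝔼 → 𝔼} (hf : IsAutCn n f) (hg : IsAutCn n g) :
    IsAutCn n (f ∘ g) := by
  obtain ⟨f1, f', f2, f3, f4⟩ := hf
  obtain ⟨g1, g', g2, g3, g4⟩ := hg
  exact ⟨f1.comp g1, g' ∘ f', g2.comp f2, f3.comp g3, f4.comp g4⟩

theorem IsAutCn.iterate {f : 𝔼 → 𝔼} (hf : IsAutCn n f) (k : ℕ) : IsAutCn n f^[k] := by
  induction k with
  | zero => exact IsAutCn.id
  | succ k ih => exact ih.comp hf

/-- The vector field `V` is *integrable by automorphisms*: some family `S h` of automorphisms is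
a consistent one-step scheme for the equation `z' = V z`, that is `S h z = z + h V z + o(h)`
as `h → 0+`, uniformly on bounded sets. -/
def HasAutScheme (n : ℕ) (V : EuclideanSpace ℂ (Fin n) → EuclideanSpace ℂ (Fin n)) : Prop :=
  Continuous V ∧ ∃ S : ℝ → EuclideanSpace ℂ (Fin n) → EuclideanSpace ℂ (Fin n),
    (∀ h, IsAutCn n (S h)) ∧ ∀ R η : ℝ, 0 < η → ∃ h₀ > 0, ∀ h : ℝ, 0 ≤ h → h ≤ h₀ →
      ∀ z, ‖z‖ ≤ R → ‖S h z - z - (h : ℂ) • V z‖ ≤ η * h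

theorem HasAutScheme.zero : HasAutScheme n 0 :=
  ⟨continuous_const, fun _ z => z, fun _ => IsAutCn.id, fun R η hη => ⟨1, one_pos,
    fun h h0 _ z _ => by simpa using by positivity⟩⟩

theorem exists_bound_closedBall {G : Type*} [NormedAddCommGroup G] {V : 𝔼 → G}
    (hV : Continuous V) (R : ℝ) : ∃ M > 0, ∀ z, ‖z‖ ≤ R → ‖V z‖ ≤ M := by
  obtain ⟨M, hM⟩ := (isCompact_closedBall (0 : 𝔼) R).exists_bound_of_continuousOn hV.continuousOn
  exact ⟨max M 1, by positivity, fun z hz => (hM z (by simpa using hz)).trans (le_max_left _ _)⟩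

/-- Composing the schemes of two fields gives a scheme for their sum (Lie's product formula). -/
theorem HasAutScheme.add {V₁ V₂ : 𝔼 → 𝔼} (h₁ : HasAutScheme n V₁) (h₂ : HasAutScheme n V₂) :
    HasAutScheme n (V₁ + V₂) := by
  obtain ⟨c₁, S₁, a₁, e₁⟩ := h₁
  obtain ⟨c₂, S₂, a₂, e₂⟩ := h₂
  refine ⟨c₁.add c₂, fun h => S₂ h ∘ S₁ h, fun h => (a₂ h).comp (a₁ h), fun R η hη => ?_⟩
  obtain ⟨M, hM, hMV⟩ := exists_bound_closedBall c₁ R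
  have huc := (isCompact_closedBall (0 : 𝔼) (R + 1)).uniformContinuousOn_of_continuous
    c₂.continuousOn
  obtain ⟨δ, hδ, hδV⟩ := Metric.uniformContinuousOn_iff.1 huc (η / 3) (by positivity)
  obtain ⟨k₁, hk₁, e₁⟩ := e₁ R (η / 3) (by positivity)
  obtain ⟨k₂, hk₂, e₂⟩ := e₂ (R + 1) (η / 3) (by positivity)
  let B : ℝ := M + η
  refine ⟨min (min k₁ k₂) (min (1 / B) (δ / (2 * B))), by positivity, fun h h0 hle z hz => ?_⟩
  simp only [le_min_iff] at hle
  obtain ⟨⟨l₁, l₂⟩, l₃, l₄⟩ := hle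
  have hB : 0 < B := by positivity
  rw [le_div_iff₀ hB] at l₃
  rw [le_div_iff₀ (by positivity)] at l₄
  have E₁ := e₁ h h0 l₁ z hz
  have hnh : ‖(h : ℂ)‖ = h := by simp [abs_of_nonneg h0]
  have hstep : ‖S₁ h z - z‖ ≤ h * B := by
    calc ‖S₁ h z - z‖ = ‖(S₁ h z - z - (h : ℂ) • V₁ z) + (h : ℂ) • V₁ z‖ := by congr 1; abel
      _ ≤ η / 3 * h + h * M := by
        refine (norm_add_le _ _).trans (add_le_add E₁ ?_)
        rw [norm_smul, hnh]
        exact mul_le_mul_of_nonneg_left (hMV z hz) h0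
      _ ≤ h * B := by simp only [B]; nlinarith [mul_nonneg h0 hη.le]
  have hz₁ : ‖S₁ h z‖ ≤ R + 1 := by
    calc ‖S₁ h z‖ = ‖z + (S₁ h z - z)‖ := by congr 1; abel
      _ ≤ R + 1 := (norm_add_le _ _).trans (by linarith)
  have E₂ := e₂ h h0 l₂ (S₁ h z) hz₁
  have E₃ : ‖V₂ (S₁ h z) - V₂ z‖ ≤ η / 3 := by
    have := hδV (S₁ h z) (by simpa using hz₁) z (by simpa using by linarith)
      (by rw [dist_eq_norm]; linarith)
    rw [dist_eq_norm] at this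
    exact this.le
  have E₃' : ‖(h : ℂ) • (V₂ (S₁ h z) - V₂ z)‖ ≤ h * (η / 3) := by
    rw [norm_smul, hnh]; gcongr
  calc ‖(S₂ h ∘ S₁ h) z - z - (h : ℂ) • (V₁ + V₂) z‖
      = ‖(S₂ h (S₁ h z) - S₁ h z - (h : ℂ) • V₂ (S₁ h z)) + (h : ℂ) • (V₂ (S₁ h z) - V₂ z)
        + (S₁ h z - z - (h : ℂ) • V₁ z)‖ := by
        simp only [Function.comp_apply, Pi.add_apply]
        congr 1; module
    _ ≤ η / 3 * h + h * (η / 3) + η / 3 * h :=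
        (norm_add_le _ _).trans (add_le_add ((norm_add_le _ _).trans (add_le_add E₂ E₃')) E₁)
    _ = η * h := by ring

/-- The complete fields used as building blocks: shear fields `g • v` and overshear fields
`(g μ) • v`, where `g` is an entire function invariant in the direction `v` and `μ` is a linear
form with `μ v = 1`. -/
def shearFields (n : ℕ) : Set (EuclideanSpace ℂ (Fin n) → EuclideanSpace ℂ (Fin n)) :=
  {V | ∃ (g : EuclideanSpace ℂ (Fin n) → ℂ) (v : EuclideanSpace ℂ (Fin n)), Differentiable ℂ g ∧
    (∀ z (s : ℂ), g (z + s • v) = g z) ∧ V = fun z => g z • v} ∪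
  {V | ∃ (g : EuclideanSpace ℂ (Fin n) → ℂ) (v : EuclideanSpace ℂ (Fin n))
    (μ : EuclideanSpace ℂ (Fin n) →L[ℂ] ℂ), Differentiable ℂ g ∧
    (∀ z (s : ℂ), g (z + s • v) = g z) ∧ μ v = 1 ∧ V = fun z => (g z * μ z) • v}

theorem hasAutScheme_shear {g : 𝔼 → ℂ} {v : 𝔼} (hg : Differentiable ℂ g)
    (hinv : ∀ z (s : ℂ), g (z + s • v) = g z) : HasAutScheme n (fun z => g z • v) := by
  refine ⟨by have := hg.continuous; fun_prop, fun h z => z + ((h : ℂ) * g z) • v, fun h => ?_,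
    fun R η hη => ⟨1, one_pos, fun h h0 _ z _ => ?_⟩⟩
  · refine ⟨by fun_prop, fun z => z + (-((h : ℂ) * g z)) • v, by fun_prop, fun z => ?_,
      fun z => ?_⟩
    · simp only [hinv]; module
    · simp only [hinv]; module
  · have : z + ((h : ℂ) * g z) • v - z - (h : ℂ) • g z • v = 0 := by module
    rw [this, norm_zero]
    positivity

theorem hasAutScheme_overshear {g : 𝔼 → ℂ} {v : 𝔼} {μ : 𝔼 →L[ℂ] ℂ} (hg : Differentiable ℂ g)
    (hinv : ∀ z (s : ℂ), g (z + s • v) = g z) (hμ : μ v = 1) :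
    HasAutScheme n (fun z => (g z * μ z) • v) := by
  have hgc := hg.continuous
  have hinverse : ∀ (h : ℂ) z, (z + ((Complex.exp (h * g z) - 1) * μ z) • v) +
      ((Complex.exp (-h * g (z + ((Complex.exp (h * g z) - 1) * μ z) • v)) - 1) *
        μ (z + ((Complex.exp (h * g z) - 1) * μ z) • v)) • v = z := by
    intro h z
    have e : Complex.exp (-h * g z) * Complex.exp (h * g z) = 1 := by
      rw [← Complex.exp_add]; simp
    rw [hinv, map_add, map_smul, hμ, add_assoc, ← add_smul, add_eq_left]
    simp only [smul_eq_mul, mul_one]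
    rw [show (Complex.exp (h * g z) - 1) * μ z + (Complex.exp (-h * g z) - 1) *
      (μ z + (Complex.exp (h * g z) - 1) * μ z) = 0 by linear_combination (μ z) * e, zero_smul]
  refine ⟨by fun_prop, fun h z => z + ((Complex.exp ((h : ℂ) * g z) - 1) * μ z) • v, fun h => ?_,
    fun R η hη => ?_⟩
  · refine ⟨by fun_prop, fun z => z + ((Complex.exp (-(h : ℂ) * g z) - 1) * μ z) • v,
      by fun_prop, fun z => hinverse h z, fun z => ?_⟩
    simpa only [neg_neg] using hinverse (-(h : ℂ)) z
  · obtain ⟨M, hM, hMg⟩ := exists_bound_closedBall hgc R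
    obtain ⟨B, hB, hBV⟩ := exists_bound_closedBall (V := fun z => μ z • v) (by fun_prop) R
    refine ⟨min (1 / M) (η / (M ^ 2 * B)), by positivity, fun h h0 hle z hz => ?_⟩
    simp only [le_min_iff] at hle
    rw [le_div_iff₀ hM, le_div_iff₀ (by positivity)] at hle
    have hnh : ‖(h : ℂ) * g z‖ ≤ h * M := by
      rw [norm_mul, Complex.norm_real, Real.norm_of_nonneg h0]
      exact mul_le_mul_of_nonneg_left (hMg z hz) h0
    have hexp := Complex.norm_exp_sub_one_sub_id_le (hnh.trans hle.1)
    have e : z + ((Complex.exp ((h : ℂ) * g z) - 1) * μ z) • v - z - (h : ℂ) • (g z * μ z) • v =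
        (Complex.exp ((h : ℂ) * g z) - 1 - (h : ℂ) * g z) • (μ z • v) := by module
    rw [e, norm_smul]
    calc _ ≤ (h * M) ^ 2 * B := by
          gcongr
          · exact hexp.trans (by gcongr)
          · exact hBV z hz
      _ = h * (M ^ 2 * B) * h := by ring
      _ ≤ η * h := by gcongr; exact hle.2

theorem hasAutScheme_of_mem_span {V : 𝔼 → 𝔼} (hV : V ∈ Submodule.span ℂ (shearFields n)) :
    HasAutScheme n V := by
  suffices h : ∀ c : ℂ, HasAutScheme n (c • V) by simpa using h 1
  induction hV using Submodule.span_induction with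
  | mem V hV =>
    intro c
    rcases hV with ⟨g, v, hg, hinv, rfl⟩ | ⟨g, v, μ, hg, hinv, hμ, rfl⟩
    · have := hasAutScheme_shear (g := fun z => c * g z) (v := v) (by fun_prop)
        fun z s => by rw [hinv]
      convert this using 2
      simp [mul_smul]
    · have := hasAutScheme_overshear (g := fun z => c * g z) (v := v) (μ := μ) (by fun_prop)
        (fun z s => by rw [hinv]) hμ
      convert this using 2
      simp [mul_smul]
  | zero => intro c; rw [smul_zero]; exact HasAutScheme.zero
  | add V W _ _ h₁ h₂ => intro c; rw [smul_add]; exact (h₁ c).add (h₂ c)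
  | smul a V _ h => intro c; rw [smul_smul]; exact h _
end Fields

/-! ### Polynomial fields are sums of shears and overshears -/

/-- If a polynomial curve lies in a subspace, then so do its coefficients. -/
theorem mem_of_forall_sum_pow_smul_mem {M : Type*} [AddCommGroup M] [Module ℂ M]
    {N : Submodule ℂ M} {K : ℕ} {u : ℕ → M}
    (h : ∀ c : ℂ, ∑ k ∈ Finset.range K, c ^ k • u k ∈ N) {k : ℕ} (hk : k < K) : u k ∈ N := by
  by_contra hcon
  obtain ⟨φ, hφ, hN⟩ := Submodule.exists_le_ker_of_notMem hcon
  let p : Polynomial ℂ := ∑ k ∈ Finset.range K, Polynomial.monomial k (φ (u k))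
  have hp : p = 0 := by
    refine Polynomial.funext fun c => ?_
    have := hN (h c)
    rw [LinearMap.mem_ker, map_sum] at this
    simpa [p, Polynomial.eval_finsetSum, mul_comm] using this
  have := congrArg (fun q => Polynomial.coeff q k) hp
  simp [p, Polynomial.coeff_monomial, hk] at this
  exact hφ this

/-- Coefficient comparison for a family of fields in the directions `c e_i - e_j`: if
`w(c) = ∑ cᵏ wₖ` and `c I (w(c)) - J (w(c))` lies in `N` for all `c`, then the coefficient
`I wₖ - J wₖ₊₁` of `cᵏ⁺¹` lies in `N`. -/
theorem sub_mem_of_forall_sum_mem {W M : Type*} [AddCommGroup W] [Module ℂ W] [AddCommGroup M]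
    [Module ℂ M] {N : Submodule ℂ M} (I J : W →ₗ[ℂ] M) {K : ℕ} {w : ℕ → W} (hw : w K = 0)
    (h : ∀ c : ℂ, c • I (∑ k ∈ Finset.range K, c ^ k • w k) -
      J (∑ k ∈ Finset.range K, c ^ k • w k) ∈ N) {k : ℕ} (hk : k < K) :
    I (w k) - J (w (k + 1)) ∈ N := by
  let u : ℕ → M := fun m => (if m = 0 then 0 else I (w (m - 1))) - J (w m)
  have hu : ∀ c : ℂ, ∑ m ∈ Finset.range (K + 1), c ^ m • u m ∈ N := by
    intro c
    convert h c using 1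
    simp only [u, smul_sub, Finset.sum_sub_distrib]
    congr 1
    · rw [Finset.sum_range_succ']
      simp [Finset.smul_sum, pow_succ', mul_smul]
    · rw [Finset.sum_range_succ]
      simp [hw]
  simpa [u] using mem_of_forall_sum_pow_smul_mem hu (k := k + 1) (by omega)

/-- Strict log-concavity of a row of Pascal's triangle, in the form of a determinant. -/
theorem choose_det_ne_zero (a b : ℕ) :
    ((a + b + 1).choose (b + 1) : ℂ) * (a + b + 2).choose (b + 1) -
      (a + b + 2).choose (b + 2) * (a + b + 1).choose b ≠ 0 := by
  have h1 := Nat.choose_succ_right_eq (a + b + 1) b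
  have h2 := Nat.choose_succ_right_eq (a + b + 1) (b + 1)
  rw [show a + b + 1 - b = a + 1 by omega] at h1
  rw [show a + b + 1 - (b + 1) = a by omega] at h2
  have h3 := Nat.choose_succ_succ (a + b + 1) b
  have h4 := Nat.choose_succ_succ (a + b + 1) (b + 1)
  have hx : 0 < (a + b + 1).choose (b + 1) := Nat.choose_pos (by omega)
  simp only [Nat.succ_eq_add_one] at h3 h4
  rw [h3, h4]
  generalize (a + b + 1).choose (b + 1) = x at *
  generalize (a + b + 1).choose b = y at *
  generalize (a + b + 1).choose (b + 1 + 1) = z at *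
  have key : y * z < x * x := by
    have e : y * z * ((a + 1) * (b + 2)) = x * x * (a * (b + 1)) := by
      calc y * z * ((a + 1) * (b + 2)) = (y * (a + 1)) * (z * (b + 1 + 1)) := by ring
        _ = _ := by rw [← h1, h2]; ring
    by_contra! hcon
    nlinarith [Nat.mul_le_mul_right ((a + 1) * (b + 2)) hcon, Nat.mul_pos hx hx]
  have : ((x * x : ℕ) : ℂ) - ((y * z : ℕ) : ℂ) ≠ 0 := by
    rw [sub_ne_zero]
    exact_mod_cast key.ne'
  convert this using 1
  push_cast
  ring

section Fields
variable {n : ℕ}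
local notation "𝔼" => EuclideanSpace ℂ (Fin n)
local notation "𝕖" i => (EuclideanSpace.single i (1 : ℂ) : EuclideanSpace ℂ (Fin n))

/-- The field `g • v` of constant direction `v`, as a linear function of `g`. -/
def dirField (v : 𝔼) : (𝔼 → ℂ) →ₗ[ℂ] (𝔼 → 𝔼) where
  toFun g := fun z => g z • v
  map_add' g h := by ext1 z; simp [add_smul]
  map_smul' c g := by ext1 z; simp [mul_smul]

theorem dirField_mem_of_invariant {g : 𝔼 → ℂ} {v : 𝔼} (hg : Differentiable ℂ g)
    (hinv : ∀ z (s : ℂ), g (z + s • v) = g z) :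
    dirField v g ∈ Submodule.span ℂ (shearFields n) :=
  Submodule.subset_span (Or.inl ⟨g, v, hg, hinv, rfl⟩)

theorem dirField_mem_of_mul {g : 𝔼 → ℂ} {v : 𝔼} (μ : 𝔼 →L[ℂ] ℂ) (hg : Differentiable ℂ g)
    (hinv : ∀ z (s : ℂ), g (z + s • v) = g z) (hμ : μ v = 1) :
    dirField v (fun z => g z * μ z) ∈ Submodule.span ℂ (shearFields n) :=
  Submodule.subset_span (Or.inr ⟨g, v, μ, hg, hinv, hμ, rfl⟩)

/-- The key algebraic step of Andersén–Lempert theory: a monomial field is a combination of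
shears and overshears in the directions `c e_i - e_j`. Expanding the shears with coefficient
`(z_i + c z_j) ^ d q` in powers of `c` gives one linear relation modulo shears between two consecutive
monomials, one multiplied by `e_i` and the other by `e_j`; the overshears give a second, independent
relation between the same two fields, so both fields vanish modulo shears. -/
theorem monomialField_mem {i j : Fin n} (hij : i ≠ j) {q : 𝔼 → ℂ} (hq : Differentiable ℂ q)
    (hqi : ∀ z (s : ℂ), q (z + s • 𝕖 i) = q z) (hqj : ∀ z (s : ℂ), q (z + s • 𝕖 j) = q z)
    (a b : ℕ) :
    dirField (𝕖 i) (fun z => z i ^ a * z j ^ b * q z) ∈ Submodule.span ℂ (shearFields n) := by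
  set N := Submodule.span ℂ (shearFields n) with hN
  have hco : ∀ k : Fin n, Differentiable ℂ fun z : 𝔼 => z k := fun k =>
    (EuclideanSpace.proj k : 𝔼 →L[ℂ] ℂ).differentiable
  have hci := hco i
  have hcj := hco j
  have hdir : ∀ (c : ℂ) (g : 𝔼 → ℂ), dirField ((c • 𝕖 i) - 𝕖 j) g =
      c • dirField (𝕖 i) g - dirField (𝕖 j) g := by
    intro c g
    ext1 z
    simp [dirField, smul_sub, smul_comm c]
  have hlin : ∀ (c : ℂ) z (s : ℂ), (z + s • ((c • 𝕖 i) - 𝕖 j)) i + c * (z + s • ((c • 𝕖 i) - 𝕖 j)) j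
      = z i + c * z j := by
    intro c z s
    simp [hij, hij.symm]
    ring
  have hqv : ∀ (c : ℂ) z (s : ℂ), q (z + s • ((c • 𝕖 i) - 𝕖 j)) = q z := by
    intro c z s
    rw [show z + s • ((c • 𝕖 i) - 𝕖 j) = z + (s * c) • (𝕖 i) + (-s) • (𝕖 j) by module, hqj, hqi]
  let T : ℕ → ℕ → 𝔼 → ℂ := fun d k z => z i ^ (d - k) * z j ^ k * q z
  -- the coefficients of `c ^ (k + 1)` in the shears `(z_i + c z_j) ^ d q`
  have hA : ∀ d k, k ≤ d → dirField (𝕖 i) ((d.choose k : ℂ) • T d k) -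
      dirField (𝕖 j) ((d.choose (k + 1) : ℂ) • T d (k + 1)) ∈ N := by
    intro d k hk
    refine sub_mem_of_forall_sum_mem (dirField (𝕖 i)) (dirField (𝕖 j)) (K := d + 1)
      (w := fun k => (d.choose k : ℂ) • T d k) (by simp) (fun c => ?_) (by omega)
    rw [← hdir]
    convert dirField_mem_of_invariant (g := fun z => (z i + c * z j) ^ d * q z)
      (v := (c • 𝕖 i) - 𝕖 j) (by fun_prop) (fun z s => by rw [hlin, hqv]) using 2
    ext1 z
    rw [add_comm (z i), add_pow, Finset.sum_mul, Finset.sum_apply]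
    refine Finset.sum_congr rfl fun k _ => ?_
    simp only [Pi.smul_apply, smul_eq_mul, T]
    ring
  -- the same for the overshears, with the linear form `-z_j` taking the value `1` on `c e_i - e_j`
  have hB : ∀ d k, k ≤ d → dirField (𝕖 i) ((d.choose k : ℂ) • T (d + 1) (k + 1)) -
      dirField (𝕖 j) ((d.choose (k + 1) : ℂ) • T (d + 1) (k + 2)) ∈ N := by
    intro d k hk
    refine sub_mem_of_forall_sum_mem (dirField (𝕖 i)) (dirField (𝕖 j)) (K := d + 1)
      (w := fun k => (d.choose k : ℂ) • T (d + 1) (k + 1)) (by simp) (fun c => ?_) (by omega)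
    rw [← hdir]
    convert dirField_mem_of_mul (g := fun z => -((z i + c * z j) ^ d * q z))
      (v := (c • 𝕖 i) - 𝕖 j) (-(EuclideanSpace.proj j : 𝔼 →L[ℂ] ℂ)) (by fun_prop)
      (fun z s => by rw [hlin, hqv]) (by simp [hij.symm]) using 2
    ext1 z
    have e : (-(EuclideanSpace.proj j : 𝔼 →L[ℂ] ℂ)) z = -z j := rfl
    rw [e, neg_mul_neg]
    rw [add_comm (z i), add_pow, Finset.sum_mul, Finset.sum_mul, Finset.sum_apply]
    refine Finset.sum_congr rfl fun k _ => ?_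
    simp only [Pi.smul_apply, smul_eq_mul, T, Nat.add_sub_add_right]
    ring
  have hinvc : ∀ {k l : Fin n} (_ : k ≠ l) (z : 𝔼) (s : ℂ), (z + s • 𝕖 k) l = z l := by
    intro k l hkl z s
    simp [hkl.symm]
  rcases a with _ | a
  · refine dirField_mem_of_invariant (by fun_prop) fun z s => ?_
    rw [hinvc hij, hqi]
    simp
  rcases b with _ | b
  · -- here `e_j`-overshears already supply the second half
    have h1 := hA (a + 1) 0 (by omega)
    have h2 : dirField (𝕖 j) (T (a + 1) 1) ∈ N := by
      convert dirField_mem_of_mul (g := fun z => z i ^ a * q z) (v := 𝕖 j)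
        (EuclideanSpace.proj j : 𝔼 →L[ℂ] ℂ) (by fun_prop)
        (fun z s => by rw [hinvc hij.symm, hqj]) (by simp) using 2
      ext1 z
      simp [T]
      ring
    have h3 := N.add_mem h1 (N.smul_mem ((a + 1 : ℕ) : ℂ) h2)
    simpa [T] using h3
  · have h1 := hA (a + b + 2) (b + 1) (by omega)
    have h2 := hB (a + b + 1) b (by omega)
    have hdet := choose_det_ne_zero a b
    set x : ℂ := ((Nat.choose (a + b + 1) (b + 1) : ℕ) : ℂ)
    set y : ℂ := ((Nat.choose (a + b + 1) b : ℕ) : ℂ)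
    set p : ℂ := ((Nat.choose (a + b + 2) (b + 1) : ℕ) : ℂ)
    set r : ℂ := ((Nat.choose (a + b + 2) (b + 2) : ℕ) : ℂ)
    have h3 := N.smul_mem (x * p - r * y)⁻¹ (N.sub_mem (N.smul_mem x h1) (N.smul_mem r h2))
    convert h3 using 1
    have e : (fun z : 𝔼 => z i ^ (a + 1) * z j ^ (b + 1) * q z) = T (a + b + 2) (b + 1) := by
      ext1 z
      simp only [T]
      rw [show a + b + 2 - (b + 1) = a + 1 by omega]
    rw [e, eq_inv_smul_iff₀ hdet]
    simp only [map_smul]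
    -- the `e_j`-components cancel in this combination, and the determinant is the `e_i`-coefficient
    change _ = x • (p • _ - r • dirField (𝕖 j) (T (a + b + 2) (b + 2))) -
      r • (y • dirField (𝕖 i) (T (a + b + 2) (b + 1)) - x • dirField (𝕖 j) (T (a + b + 2) (b + 2)))
    module

theorem polynomialField_mem (hn : 2 ≤ n) (p : Fin n → MvPolynomial (Fin n) ℂ) :
    (fun z : 𝔼 => ∑ i, MvPolynomial.eval (fun k => z k) (p i) • 𝕖 i) ∈
      Submodule.span ℂ (shearFields n) := by
  have e : (fun z : 𝔼 => ∑ i, MvPolynomial.eval (fun k => z k) (p i) • 𝕖 i) =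
      ∑ i, dirField (𝕖 i) (fun z => MvPolynomial.eval (fun k => z k) (p i)) := by
    ext1 z
    simp [dirField]
  rw [e]
  refine Submodule.sum_mem _ fun i _ => ?_
  generalize p i = p
  induction p using MvPolynomial.induction_on' with
  | monomial u a =>
    obtain ⟨j, hij⟩ : ∃ j, i ≠ j :=
      have : Nontrivial (Fin n) := Fin.nontrivial_iff_two_le.2 hn
      (exists_ne i).imp fun _ h => h.symm
    let q : 𝔼 → ℂ := fun z => ∏ k ∈ (Finset.univ.erase i).erase j, z k ^ u k
    have hq : Differentiable ℂ q := by
      rw [← differentiableOn_univ]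
      exact differentiableOn_finsetProd _ fun k => by fun_prop
    have hqk : ∀ l : Fin n, (l = i ∨ l = j) → ∀ (z : 𝔼) (s : ℂ), q (z + s • 𝕖 l) = q z := by
      intro l hl z s
      refine Finset.prod_congr rfl fun k hk => ?_
      have : k ≠ l := by
        simp only [Finset.mem_erase] at hk
        rcases hl with rfl | rfl
        exacts [hk.2.1, hk.1]
      simp [this]
    have h := Submodule.smul_mem _ a (monomialField_mem hij hq (hqk i (Or.inl rfl))
      (hqk j (Or.inr rfl)) (u i) (u j))
    rw [← map_smul] at h
    convert h using 2
    ext1 z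
    simp only [MvPolynomial.eval_monomial, Pi.smul_apply, smul_eq_mul, q]
    rw [Finsupp.prod_fintype _ _ (by simp), ← Finset.mul_prod_erase _ _ (Finset.mem_univ i),
      ← Finset.mul_prod_erase (Finset.univ.erase i) _
        (Finset.mem_erase.2 ⟨hij.symm, Finset.mem_univ j⟩),
      mul_assoc]
  | add p q hp hq =>
    have := Submodule.add_mem _ hp hq
    rw [← map_add] at this
    convert this using 2
    ext1 z
    simp
end Fields

/-! ### One-step schemes and the dilation isotopy -/

section Flow
variable {E : Type} [NormedAddCommGroup E] [NormedSpace ℂ E]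

/-- Discrete Gronwall estimate. The points `y j` follow an exact solution up to `η h` per step
and `S` is a one-step scheme that is accurate in the `ρ`-neighbourhood of this solution. -/
theorem scheme_error {S : E → E} {y w : ℕ → E} {h η M ρ T : ℝ} {N : ℕ} (h0 : 0 ≤ h) (hη : 0 ≤ η)
    (hM : 0 ≤ M) (hN : N * h ≤ T) (hρ : 3 * η * T * Real.exp (M * T) < ρ)
    (hy : ∀ j < N, ‖y (j + 1) - y j - (h : ℂ) • w j‖ ≤ η * h)
    (hS : ∀ j < N, ∀ x, ‖x - y j‖ < ρ →
      ‖S x - x - (h : ℂ) • w j‖ ≤ h * (2 * η + M * ‖x - y j‖)) :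
    ‖S^[N] (y 0) - y N‖ ≤ 3 * η * T * Real.exp (M * T) := by
  have hT : 0 ≤ T := le_trans (by positivity) hN
  have hbd : ∀ j ≤ N, 3 * η * (j * h) * (1 + h * M) ^ j ≤ 3 * η * T * Real.exp (M * T) := by
    intro j hj
    have h1 : (j : ℝ) * h ≤ T := le_trans (by gcongr) hN
    have h2 : (1 + h * M) ^ j ≤ Real.exp (M * T) := by
      calc (1 + h * M) ^ j ≤ Real.exp (h * M) ^ j := by
            gcongr
            rw [add_comm]
            exact Real.add_one_le_exp _
        _ = Real.exp (M * (j * h)) := by rw [← Real.exp_nat_mul]; ring_nf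
        _ ≤ _ := by gcongr
    gcongr
  suffices key : ∀ j ≤ N, ‖S^[j] (y 0) - y j‖ ≤ 3 * η * (j * h) * (1 + h * M) ^ j from
    (key N le_rfl).trans (hbd N le_rfl)
  intro j
  induction j with
  | zero => intro _; simp
  | succ j ih =>
    intro hj
    have e := ih (by omega)
    have hlt := (e.trans (hbd j (by omega))).trans_lt hρ
    have s := hS j hj _ hlt
    have y' := hy j hj
    rw [Function.iterate_succ_apply']
    set x := S^[j] (y 0)
    have hpow : 1 ≤ (1 + h * M) ^ (j + 1) := one_le_pow₀ (by nlinarith)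
    calc ‖S x - y (j + 1)‖ = ‖(S x - x - (h : ℂ) • w j) - (y (j + 1) - y j - (h : ℂ) • w j) +
          (x - y j)‖ := by congr 1; abel
      _ ≤ h * (2 * η + M * ‖x - y j‖) + η * h + ‖x - y j‖ :=
        (norm_add_le _ _).trans (add_le_add ((norm_sub_le _ _).trans (add_le_add s y')) le_rfl)
      _ = (1 + h * M) * ‖x - y j‖ + 3 * η * h * 1 := by ring
      _ ≤ (1 + h * M) * (3 * η * (j * h) * (1 + h * M) ^ j) +
          3 * η * h * (1 + h * M) ^ (j + 1) := by gcongr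
      _ = 3 * η * ((j + 1 : ℕ) * h) * (1 + h * M) ^ (j + 1) := by push_cast; ring

/-- A holomorphic field is uniformly Lipschitz between the points of a compact set and their
neighbours. -/
theorem exists_lipschitz_near [FiniteDimensional ℂ E] {W : E → E} {Ω K : Set E} (hΩ : IsOpen Ω)
    (hW : DifferentiableOn ℂ W Ω) (hK : IsCompact K) (hKΩ : K ⊆ Ω) :
    ∃ ρ > 0, ∃ M : ℝ, 0 ≤ M ∧ cthickening ρ K ⊆ Ω ∧
      ∀ y ∈ K, ∀ x, ‖x - y‖ ≤ ρ → ‖W x - W y‖ ≤ M * ‖x - y‖ := by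
  have : ProperSpace E := FiniteDimensional.proper ℂ E
  obtain ⟨ρ, hρ, hsub⟩ := hK.exists_cthickening_subset_open hΩ hKΩ
  obtain ⟨M, hM⟩ := (hK.cthickening (r := ρ)).exists_bound_of_continuousOn
    ((differentiableOn_fderiv hΩ hW).continuousOn.mono hsub)
  refine ⟨ρ, hρ, max M 0, le_max_right _ _, hsub, fun y hy x hx => ?_⟩
  have hball : closedBall y ρ ⊆ cthickening ρ K := closedBall_subset_cthickening hy ρ
  have : NormedSpace ℝ E := NormedSpace.restrictScalars ℝ ℂ E
  exact (convex_closedBall y ρ).norm_image_sub_le_of_norm_fderiv_le (𝕜 := ℂ)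
    (fun z hz => hW.differentiableAt (hΩ.mem_nhds (hsub (hball hz))))
    (fun z hz => (hM z (hball hz)).trans (le_max_left _ _))
    (mem_closedBall_self hρ.le) (by simpa [dist_eq_norm] using hx)

/-- The curves `t ↦ F (eᵗ x)` have velocity `F'(x) x` at `t = 0`, uniformly for `x` in a compact
set. -/
theorem exists_dilation_step [FiniteDimensional ℂ E] {F : E → E} {D Q : Set E}
    (hD : IsOpen D)
    (hF : DifferentiableOn ℂ F D) (hQ : IsCompact Q) (hQD : Q ⊆ D) {η : ℝ} (hη : 0 < η) :
    ∃ h₀ > 0, ∀ h : ℝ, 0 ≤ h → h ≤ h₀ → ∀ x ∈ Q,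
      ‖F (Complex.exp h • x) - F x - (h : ℂ) • fderiv ℂ F x x‖ ≤ η * h := by
  have : ProperSpace E := FiniteDimensional.proper ℂ E
  obtain ⟨r, hr, hsub⟩ := hQ.exists_cthickening_subset_open hD hQD
  obtain ⟨M, hM⟩ := (hQ.cthickening (r := r)).exists_bound_of_continuousOn
    (hF.continuousOn.mono hsub)
  obtain ⟨B, hB⟩ := hQ.exists_bound_of_continuousOn (f := fun x => x) continuousOn_id
  obtain ⟨C, hC⟩ := hQ.exists_bound_of_continuousOn (f := fun x => fderiv ℂ F x x)
    (((differentiableOn_fderiv hD hF).continuousOn.clm_apply continuousOn_id).mono hQD)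
  let B' := max B 1
  let M' := max M 0
  let C' := max C 0
  have hB' : 0 < B' := lt_max_of_lt_right one_pos
  have hM' : 0 ≤ M' := le_max_right _ _
  have hC' : 0 ≤ C' := le_max_right _ _
  let A := 4 * M' * (2 * B' / r) ^ 2 + C' + 1
  have hA : 0 < A := by positivity
  refine ⟨min (min 1 (r / (4 * B'))) (η / A), by positivity, fun h h0 hle x hx => ?_⟩
  simp only [le_min_iff] at hle
  obtain ⟨⟨l₁, l₂⟩, l₃⟩ := hle
  rw [le_div_iff₀ (by positivity)] at l₂
  rw [le_div_iff₀ hA] at l₃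
  have hnh : ‖(h : ℂ)‖ = h := by simp [abs_of_nonneg h0]
  have e1 : ‖Complex.exp h - 1 - h‖ ≤ h ^ 2 := by
    simpa [hnh] using Complex.norm_exp_sub_one_sub_id_le (x := (h : ℂ)) (by rwa [hnh])
  have e2 : ‖Complex.exp h - 1‖ ≤ 2 * h := by
    simpa [abs_of_nonneg h0] using Complex.norm_exp_sub_one_le (x := (h : ℂ)) (by rwa [hnh])
  set u := (Complex.exp h - 1) • x with hu
  have hun : ‖u‖ ≤ 2 * h * B' := by
    rw [hu, norm_smul]
    exact mul_le_mul e2 ((hB x hx).trans (le_max_left _ _)) (norm_nonneg _) (by positivity)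
  have hball : ball x r ⊆ cthickening r Q :=
    ball_subset_closedBall.trans (closedBall_subset_cthickening hx r)
  have ht := norm_taylor_le_of_ball (z := x) (w := u) (M := M') (hF.mono (hball.trans hsub))
    (fun w hw => (hM w (hball hw)).trans (le_max_left _ _)) (by linarith)
  have hxu : x + u = Complex.exp h • x := by rw [hu]; module
  rw [hxu, hu, map_smul, ← hu] at ht
  calc _ = ‖(F (Complex.exp h • x) - F x - (Complex.exp h - 1) • fderiv ℂ F x x) +
        (Complex.exp h - 1 - h) • fderiv ℂ F x x‖ := by congr 1; module
    _ ≤ 4 * M' * (2 * h * B' / r) ^ 2 + h ^ 2 * C' := by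
      refine (norm_add_le _ _).trans (add_le_add (ht.trans (by gcongr)) ?_)
      rw [norm_smul]
      exact mul_le_mul e1 ((hC x hx).trans (le_max_left _ _)) (norm_nonneg _) (by positivity)
    _ = h * (A - 1) * h := by simp only [A]; ring
    _ ≤ η * h := by gcongr; linarith

/-- Near the origin `F` is almost affine: `G` undoes the affine map `z ↦ F 0 + δ F'(0) z` up to a
small relative error, `G` being a local inverse of `F`. -/
theorem exists_affine_start {F G : E → E} {Ω L : Set E} (hΩ : Ω ∈ 𝓝 (F 0)) (A : E ≃L[ℂ] E)
    (hG0 : G (F 0) = 0) (hG : HasFDerivAt G (A.symm : E →L[ℂ] E) (F 0)) (hL : IsCompact L) {r : ℝ}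
    (hr : 0 < r) : ∃ δ : ℝ, 0 < δ ∧ δ < 1 ∧ ∀ z ∈ L, F 0 + (δ : ℂ) • A z ∈ Ω ∧
      ‖(δ : ℂ)⁻¹ • G (F 0 + (δ : ℂ) • A z) - z‖ ≤ r := by
  obtain ⟨B, hB⟩ := hL.exists_bound_of_continuousOn (f := fun z => A z) A.continuous.continuousOn
  let B' := max B 1
  have hB' : 0 < B' := lt_max_of_lt_right one_pos
  have h1 := hG.isLittleO.def (show 0 < r / B' by positivity)
  obtain ⟨κ, hκ, h2⟩ := Metric.eventually_nhds_iff_ball.1 (h1.and hΩ)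
  refine ⟨min (1 / 2) (κ / (2 * B')), by positivity, (min_le_left _ _).trans_lt (by norm_num),
    fun z hz => ?_⟩
  have hδ : 0 < min (1 / 2) (κ / (2 * B')) := by positivity
  have hδ' : min (1 / 2) (κ / (2 * B')) ≤ κ / (2 * B') := min_le_right _ _
  rw [le_div_iff₀ (by positivity)] at hδ'
  generalize min (1 / 2) (κ / (2 * B')) = δ at hδ hδ'
  have hnδ : ‖(δ : ℂ)‖ = δ := by simp [abs_of_pos hδ]
  have hδ0 : (δ : ℂ) ≠ 0 := by exact_mod_cast hδ.ne'
  have hAz : ‖A z‖ ≤ B' := (hB z hz).trans (le_max_left _ _)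
  have hn : ‖(δ : ℂ) • A z‖ ≤ δ * B' := by
    rw [norm_smul, hnδ]; gcongr
  obtain ⟨h3, h4⟩ := h2 (F 0 + (δ : ℂ) • A z) (by
    rw [mem_ball, dist_eq_norm, add_sub_cancel_left]
    refine hn.trans_lt ?_
    nlinarith)
  refine ⟨h4, ?_⟩
  rw [hG0, add_sub_cancel_left, sub_zero] at h3
  simp only [ContinuousLinearEquiv.coe_coe, map_smul, A.symm_apply_apply] at h3
  have e : (δ : ℂ)⁻¹ • G (F 0 + (δ : ℂ) • A z) - z =
      (δ : ℂ)⁻¹ • (G (F 0 + (δ : ℂ) • A z) - (δ : ℂ) • z) := by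
    rw [smul_sub, inv_smul_smul₀ hδ0]
  rw [e, norm_smul, norm_inv, hnδ, inv_mul_le_iff₀ hδ]
  calc _ ≤ r / B' * ‖(δ : ℂ) • A z‖ := h3
    _ ≤ r / B' * (δ * B') := by gcongr
    _ = δ * r := by field_simp
end Flow

/-! ### The approximation theorem -/

section Main
variable {n : ℕ}
local notation "𝔼" => EuclideanSpace ℂ (Fin n)

theorem isAutCn_affine (b : 𝔼) (c : ℂ) (hc : c ≠ 0) (A : 𝔼 ≃L[ℂ] 𝔼) :
    IsAutCn n (fun z => b + c • A z) := by
  have h1 := A.differentiable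
  have h2 := A.symm.differentiable
  refine ⟨by fun_prop, fun w => A.symm (c⁻¹ • (w - b)), by fun_prop, fun z => ?_, fun z => ?_⟩
  · simp [hc]
  · simp [hc]

/-- On a Runge domain, holomorphic fields are limits of polynomial fields, hence of fields which
are integrable by automorphisms. -/
theorem exists_autScheme_approx (hn : 2 ≤ n) {Ω K : Set 𝔼} (hΩ : IsRunge n Ω) {W : 𝔼 → 𝔼}
    (hW : DifferentiableOn ℂ W Ω) (hK : IsCompact K) (hKΩ : K ⊆ Ω) {η : ℝ} (hη : 0 < η) :
    ∃ P : 𝔼 → 𝔼, HasAutScheme n P ∧ ∀ z ∈ K, ‖P z - W z‖ ≤ η := by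
  have hn0 : (0 : ℝ) < n := by exact_mod_cast (by omega : 0 < n)
  have hco : ∀ i : Fin n, DifferentiableOn ℂ (fun z => W z i) Ω := fun i =>
    (EuclideanSpace.proj i : 𝔼 →L[ℂ] ℂ).differentiable.comp_differentiableOn hW
  choose p hp using fun i => hΩ.2 _ (hco i) K hK hKΩ (η / n) (by positivity)
  refine ⟨_, hasAutScheme_of_mem_span (polynomialField_mem hn p), fun z hz => ?_⟩
  have e : W z = ∑ i, W z i • EuclideanSpace.single i (1 : ℂ) := by
    ext k
    simp [Pi.single_apply]
  rw [e, ← Finset.sum_sub_distrib]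
  calc _ ≤ ∑ i : Fin n, η / n := by
        refine norm_sum_le_of_le _ fun i _ => ?_
        rw [← sub_smul, norm_smul, norm_sub_rev, PiLp.norm_single, norm_one, mul_one]
        exact (hp i z hz).le
    _ = η := by
        rw [Finset.sum_const, Finset.card_univ, Fintype.card_fin, nsmul_eq_mul]
        field_simp

/-- The theorem for a convex domain containing the origin. The field `W (F x) = F'(x) x`
generates the isotopy `F (e^{-t} x)`, which joins `F` to an almost affine map. -/
theorem exists_aut_approx_of_zero_mem (hn : 2 ≤ n) {D : Set 𝔼} (hD : IsOpen D)
    (hconv : Convex ℝ D) (h0D : (0 : 𝔼) ∈ D) {F : 𝔼 → 𝔼} (hinj : InjOn F D)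
    (hF : DifferentiableOn ℂ F D) (hR : IsRunge n (F '' D)) {L : Set 𝔼} (hL : IsCompact L)
    (hLD : L ⊆ D) {ε : ℝ} (hε : 0 < ε) :
    ∃ α : 𝔼 → 𝔼, IsAutCn n α ∧ ∀ z ∈ L, ‖F z - α z‖ < ε := by
  set G := Function.invFunOn F D with hGdef
  have hGF : ∀ z ∈ D, G (F z) = z := fun z hz => hinj.leftInvOn_invFunOn hz
  have hGd : DifferentiableOn ℂ G (F '' D) := holomorphic_inverse hD hF hinj hGF
  have hGD : ∀ u ∈ F '' D, G u ∈ D := by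
    rintro _ ⟨z, hz, rfl⟩
    rwa [hGF z hz]
  have hFG : ∀ u ∈ F '' D, F (G u) = u := by
    rintro _ ⟨z, hz, rfl⟩
    rw [hGF z hz]
  -- a compact neighbourhood of `L` on which `F` is uniformly continuous
  obtain ⟨r, hr, hLr⟩ := hL.exists_cthickening_subset_open hD hLD
  have hL' : IsCompact (cthickening r L) := hL.cthickening
  obtain ⟨κ, hκ, hκF⟩ := Metric.uniformContinuousOn_iff.1
    (hL'.uniformContinuousOn_of_continuous (hF.continuousOn.mono hLr)) (ε / 2) (by positivity)
  let Q : Set 𝔼 := (fun p : ℝ × 𝔼 => p.1 • p.2) '' (Icc 0 1 ×ˢ cthickening r L)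
  have hQ : IsCompact Q := (isCompact_Icc.prod hL').image (by fun_prop)
  have hQD : Q ⊆ D := by
    rintro _ ⟨⟨t, x⟩, ⟨ht, hx⟩, rfl⟩
    exact hconv.smul_mem_of_zero_mem h0D (hLr hx) ht
  have hK : IsCompact (F '' Q) := hQ.image_of_continuousOn (hF.continuousOn.mono hQD)
  let W : 𝔼 → 𝔼 := fun u => fderiv ℂ F (G u) (G u)
  have hW : DifferentiableOn ℂ W (F '' D) :=
    ((differentiableOn_fderiv hD hF).comp hGd hGD).clm_apply hGd
  obtain ⟨ρ, hρ, M, hM, hKρ, hlip⟩ := exists_lipschitz_near hR.1 hW hK (image_mono hQD)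
  obtain ⟨A, hA⟩ := exists_equiv_of_injOn hD hF hinj h0D
  have hGA : HasFDerivAt G (A.symm : 𝔼 →L[ℂ] 𝔼) (F 0) := by
    have hs : HasStrictFDerivAt F (A : 𝔼 →L[ℂ] 𝔼) 0 := by
      rw [hA]
      exact ((contDiffOn_one_of_differentiableOn hD hF).contDiffAt
        (hD.mem_nhds h0D)).hasStrictFDerivAt one_ne_zero
    exact (hs.to_local_left_inverse (g := G)
      (by filter_upwards [hD.mem_nhds h0D] with z hz using hGF z hz)).hasFDerivAt
  obtain ⟨δ, hδ, hδ1, hstart⟩ := exists_affine_start (hR.1.mem_nhds (mem_image_of_mem F h0D)) A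
    (hGF 0 h0D) hGA hL (r := min r (κ / 2)) (by positivity)
  -- the time needed to dilate `δ z'` back to `z'`
  let T : ℝ := -Real.log δ
  have hT : 0 < T := neg_pos.2 (Real.log_neg hδ hδ1)
  obtain ⟨η, hη, hηρ⟩ : ∃ η > 0, 3 * η * T * Real.exp (M * T) < min ρ (ε / 2) := by
    have hm : 0 < min ρ (ε / 2) := by positivity
    refine ⟨min ρ (ε / 2) / (2 * (3 * T * Real.exp (M * T))), by positivity, ?_⟩
    have : 3 * (min ρ (ε / 2) / (2 * (3 * T * Real.exp (M * T)))) * T * Real.exp (M * T) =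
        min ρ (ε / 2) / 2 := by field_simp
    rw [this]
    exact half_lt_self hm
  have hKρc : IsCompact (cthickening ρ (F '' Q)) := hK.cthickening
  obtain ⟨P, ⟨-, S, hS, hSP⟩, hPW⟩ := exists_autScheme_approx hn hR hW hKρc hKρ hη
  obtain ⟨B, hB⟩ := hKρc.exists_bound_of_continuousOn (f := fun x => x) continuousOn_id
  obtain ⟨h₁, hh₁, hS₁⟩ := hSP B η hη
  obtain ⟨h₂, hh₂, hF₂⟩ := exists_dilation_step hD hF hQ hQD hη
  obtain ⟨N, hN⟩ := exists_nat_gt (T / min h₁ h₂)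
  have hmin : 0 < min h₁ h₂ := by positivity
  have hN0 : (0 : ℝ) < N := (by positivity : 0 < T / min h₁ h₂).trans hN
  let h : ℝ := T / N
  have hh0 : 0 ≤ h := by positivity
  have hNh : N * h = T := by simp only [h]; field_simp
  have hhle : h ≤ min h₁ h₂ := by
    rw [div_lt_iff₀ hmin] at hN
    simp only [h]
    rw [div_le_iff₀ hN0]
    linarith
  refine ⟨(S h)^[N] ∘ fun z => F 0 + (δ : ℂ) • A z, ((hS h).iterate N).comp
    (isAutCn_affine _ _ (by exact_mod_cast hδ.ne') A), fun z hz => ?_⟩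
  obtain ⟨hzΩ, hz'⟩ := hstart z hz
  set x₀ := G (F 0 + (δ : ℂ) • A z) with hx₀
  set z' := (δ : ℂ)⁻¹ • x₀ with hz'def
  have hz'L : z' ∈ cthickening r L := by
    refine closedBall_subset_cthickening hz r ?_
    rw [mem_closedBall, dist_eq_norm]
    exact hz'.trans (min_le_left _ _)
  have hδ0 : (δ : ℂ) ≠ 0 := by exact_mod_cast hδ.ne'
  -- the points `x j` of the dilation flow, from `x₀ = δ z'` to `z'`
  let x : ℕ → 𝔼 := fun j => Complex.exp ((j * h : ℝ) : ℂ) • x₀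
  have hxz : ∀ j, x j = (Real.exp (j * h - T)) • z' := by
    intro j
    have e : Real.exp (j * h - T) = Real.exp (j * h) * δ := by
      rw [Real.exp_sub, Real.exp_neg, Real.exp_log hδ, div_inv_eq_mul]
    rw [e, ← Complex.coe_smul, hz'def, smul_smul]
    simp only [x]
    push_cast
    rw [mul_assoc, mul_inv_cancel₀ hδ0, mul_one]
  have hxQ : ∀ j ≤ N, x j ∈ Q := by
    intro j hj
    refine ⟨(Real.exp (j * h - T), z'), ⟨⟨(Real.exp_pos _).le, ?_⟩, hz'L⟩, (hxz j).symm⟩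
    rw [Real.exp_le_one_iff, ← hNh, sub_nonpos]
    gcongr
  have hxN : x N = z' := by rw [hxz, hNh, sub_self, Real.exp_zero, one_smul]
  have hx0 : x 0 = x₀ := by simp [x]
  have hxs : ∀ j, x (j + 1) = Complex.exp h • x j := by
    intro j
    simp only [x]
    rw [smul_smul, ← Complex.exp_add]
    congr 2
    push_cast
    ring
  -- the curve `F (x j)` follows the field `W`, and so does the scheme `S h` near it
  have herr := scheme_error (S := S h) (y := fun j => F (x j)) (w := fun j => W (F (x j)))
    (ρ := ρ) hh0 hη.le hM hNh.le (hηρ.trans_le (min_le_left _ _)) (fun j hj => by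
      have hq := hxQ j hj.le
      simp only [W, hGF _ (hQD hq), hxs]
      exact hF₂ h hh0 (hhle.trans (min_le_right _ _)) _ hq) (fun j hj u hu => by
      have hq := mem_image_of_mem F (hxQ j hj.le)
      have huK : u ∈ cthickening ρ (F '' Q) := by
        refine closedBall_subset_cthickening hq ρ ?_
        rw [mem_closedBall, dist_eq_norm]
        exact hu.le
      have e1 := hS₁ h hh0 (hhle.trans (min_le_left _ _)) u (hB u huK)
      have e2 := hPW u huK
      have e3 := hlip _ hq u hu.le
      have hnh : ‖(h : ℂ)‖ = h := by simp [abs_of_nonneg hh0]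
      calc _ = ‖(S h u - u - (h : ℂ) • P u) + (h : ℂ) • (P u - W u) +
            (h : ℂ) • (W u - W (F (x j)))‖ := by congr 1; module
        _ ≤ η * h + h * η + h * (M * ‖u - F (x j)‖) := by
          refine (norm_add_le _ _).trans (add_le_add ((norm_add_le _ _).trans
            (add_le_add e1 ?_)) ?_)
          · rw [norm_smul, hnh]; gcongr
          · rw [norm_smul, hnh]; gcongr
        _ = _ := by ring)
  simp only [hx0, hxN] at herr
  have hstart' : F x₀ = F 0 + (δ : ℂ) • A z := hFG _ hzΩ
  rw [hstart'] at herr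
  have hclose : ‖F z - F z'‖ < ε / 2 := by
    have := hκF z (self_subset_cthickening L hz) z' hz'L (by
      rw [dist_comm, dist_eq_norm]
      exact (hz'.trans (min_le_right _ _)).trans_lt (half_lt_self hκ))
    rwa [dist_eq_norm] at this
  rw [norm_sub_rev] at herr
  have := herr.trans_lt (hηρ.trans_le (min_le_right _ _))
  calc ‖F z - ((S h)^[N] ∘ fun z => F 0 + (δ : ℂ) • A z) z‖
      ≤ ‖F z - F z'‖ + ‖F z' - (S h)^[N] (F 0 + (δ : ℂ) • A z)‖ :=
        norm_sub_le_norm_sub_add_norm_sub _ _ _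
    _ < ε := by linarith
end Main

end AndersenLempert

/-- Andersén–Lempert approximation: an injective holomorphic map from an open convex
domain `D ⊆ ℂⁿ` (`n ≥ 2`) with Runge image can be approximated, uniformly on compact
subsets of `D`, by holomorphic automorphisms of ℂⁿ. -/
theorem stmt4 (n : ℕ) (hn : 2 ≤ n)
    (D : Set (EuclideanSpace ℂ (Fin n))) (hD : IsOpen D) (hconv : Convex ℝ D)
    (F : EuclideanSpace ℂ (Fin n) → EuclideanSpace ℂ (Fin n))
    (hFinj : InjOn F D) (hFholo : DifferentiableOn ℂ F D)
    (hFRunge : IsRunge n (F '' D))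
    (L : Set (EuclideanSpace ℂ (Fin n))) (hL : IsCompact L) (hLD : L ⊆ D)
    (ε : ℝ) (hε : 0 < ε) :
    ∃ α : EuclideanSpace ℂ (Fin n) → EuclideanSpace ℂ (Fin n),
      IsAutCn n α ∧ ∀ z ∈ L, ‖F z - α z‖ < ε := by
  rcases L.eq_empty_or_nonempty with rfl | ⟨a, ha⟩
  · exact ⟨fun z => z, IsAutCn.id, by simp⟩
  -- translate the point `a` of the domain to the origin
  let τ : EuclideanSpace ℂ (Fin n) ≃ₜ EuclideanSpace ℂ (Fin n) := Homeomorph.addLeft a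
  have hτ : ∀ z, τ z = a + z := fun _ => rfl
  have himg : (F ∘ τ) '' (τ ⁻¹' D) = F '' D := by
    rw [image_comp, image_preimage_eq _ τ.surjective]
  obtain ⟨α, hα, hαF⟩ := exists_aut_approx_of_zero_mem hn (D := τ ⁻¹' D) (F := F ∘ τ)
    (L := τ ⁻¹' L) (hD.preimage τ.continuous) (hconv.translate_preimage_right a)
    (by simpa [hτ] using hLD ha)
    (fun z hz w hw h => τ.injective (hFinj hz hw h))
    (hFholo.comp (by change DifferentiableOn ℂ (fun z => a + z) _; fun_prop) fun _ hz => hz)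
    (by rwa [himg]) (τ.isCompact_preimage.2 hL) (preimage_mono hLD) hε
  refine ⟨α ∘ fun z => -a + (1 : ℂ) • ContinuousLinearEquiv.refl ℂ _ z,
    hα.comp (isAutCn_affine _ _ one_ne_zero _), fun z hz => ?_⟩
  have := hαF (-a + z) (by simpa [hτ] using hz)
  simpa [hτ] using this
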